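/- The center of the affine Hecke–Clifford superalgebra H_n (equivalently, its supercenter) consists exactly of the symmetric polynomials in X_1+X_1^{−1},…,X_n+X_n^{−1}: an element z ∈ H_n satisfies zy = yz for all y ∈ H_n if and only if z lies in F[X_1+X_1^{−1},…,X_n+X_n^{−1}]^{S_n}. -/

import Mathlib

set_option maxHeartbeats 1000000

namespace HC

/-- Generators of the affine Hecke–Clifford superalgebra `H_n`. -/
inductive Gen (n : ℕ) : Type
  | X : Fin n → Gen n
  | Xinv : Fin n → Gen n
  | C : Fin n → Gen n
  | T : Fin (n - 1) → Gen n

/-- The node `i` of `Fin n`, for `i : Fin (n-1)` (1-based: the node `i`). -/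
def lo {n : ℕ} (i : Fin (n - 1)) : Fin n :=
  ⟨i.val, by have := i.isLt; omega⟩

/-- The node `i+1` of `Fin n`, for `i : Fin (n-1)`. -/
def hi {n : ℕ} (i : Fin (n - 1)) : Fin n :=
  ⟨i.val + 1, by have := i.isLt; omega⟩

variable (F : Type) [Field F]

/-- The free algebra on the generators. -/
abbrev FA (n : ℕ) : Type := FreeAlgebra F (Gen n)

noncomputable def fx {n : ℕ} (i : Fin n) : FA F n := FreeAlgebra.ι F (Gen.X i)
noncomputable def fxinv {n : ℕ} (i : Fin n) : FA F n := FreeAlgebra.ι F (Gen.Xinv i)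
noncomputable def fc {n : ℕ} (i : Fin n) : FA F n := FreeAlgebra.ι F (Gen.C i)
noncomputable def ft {n : ℕ} (i : Fin (n - 1)) : FA F n := FreeAlgebra.ι F (Gen.T i)

/-- The defining relations of the affine Hecke–Clifford superalgebra, with parameter
`q` and `ξ = q - q⁻¹`. -/
inductive Rel (q : F) (n : ℕ) : FA F n → FA F n → Prop
  | XXinv (i : Fin n) : Rel q n (fx F i * fxinv F i) 1
  | XinvX (i : Fin n) : Rel q n (fxinv F i * fx F i) 1
  | XX (i j : Fin n) : Rel q n (fx F i * fx F j) (fx F j * fx F i)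
  | XiXi (i j : Fin n) : Rel q n (fxinv F i * fxinv F j) (fxinv F j * fxinv F i)
  | XXi (i j : Fin n) (h : i ≠ j) : Rel q n (fx F i * fxinv F j) (fxinv F j * fx F i)
  | CC (i : Fin n) : Rel q n (fc F i * fc F i) 1
  | Canti (i j : Fin n) (h : i ≠ j) : Rel q n (fc F i * fc F j) (-(fc F j * fc F i))
  | CX (i : Fin n) : Rel q n (fc F i * fx F i) (fxinv F i * fc F i)
  | CXi (i : Fin n) : Rel q n (fc F i * fxinv F i) (fx F i * fc F i)
  | CXo (i j : Fin n) (h : i ≠ j) : Rel q n (fc F i * fx F j) (fx F j * fc F i)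
  | CXio (i j : Fin n) (h : i ≠ j) : Rel q n (fc F i * fxinv F j) (fxinv F j * fc F i)
  | Tquad (i : Fin (n - 1)) : Rel q n (ft F i * ft F i) ((q - q⁻¹) • ft F i + 1)
  | Tbraid (i j : Fin (n - 1)) (h : (j : ℕ) = (i : ℕ) + 1) :
      Rel q n (ft F i * ft F j * ft F i) (ft F j * ft F i * ft F j)
  | TTfar (i j : Fin (n - 1)) (h : (i : ℕ) + 1 < (j : ℕ)) :
      Rel q n (ft F i * ft F j) (ft F j * ft F i)
  | TC (i : Fin (n - 1)) : Rel q n (ft F i * fc F (lo i)) (fc F (hi i) * ft F i)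
  | TCo (i : Fin (n - 1)) (j : Fin n) (h1 : j ≠ lo i) (h2 : j ≠ hi i) :
      Rel q n (ft F i * fc F j) (fc F j * ft F i)
  | TXo (i : Fin (n - 1)) (j : Fin n) (h1 : j ≠ lo i) (h2 : j ≠ hi i) :
      Rel q n (ft F i * fx F j) (fx F j * ft F i)
  | TXio (i : Fin (n - 1)) (j : Fin n) (h1 : j ≠ lo i) (h2 : j ≠ hi i) :
      Rel q n (ft F i * fxinv F j) (fxinv F j * ft F i)
  | cross (i : Fin (n - 1)) :
      Rel q n ((ft F i + (q - q⁻¹) • (fc F (lo i) * fc F (hi i))) * fx F (lo i) * ft F i)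
        (fx F (hi i))

/-- The affine Hecke–Clifford superalgebra `H_n` over `F` with parameter `q`. -/
abbrev H (q : F) (n : ℕ) : Type := RingQuot (Rel F q n)

noncomputable def X (q : F) {n : ℕ} (i : Fin n) : H F q n :=
  RingQuot.mkAlgHom F (Rel F q n) (fx F i)

noncomputable def Xinv (q : F) {n : ℕ} (i : Fin n) : H F q n :=
  RingQuot.mkAlgHom F (Rel F q n) (fxinv F i)

noncomputable def C (q : F) {n : ℕ} (i : Fin n) : H F q n :=
  RingQuot.mkAlgHom F (Rel F q n) (fc F i)

noncomputable def T (q : F) {n : ℕ} (i : Fin (n - 1)) : H F q n :=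
  RingQuot.mkAlgHom F (Rel F q n) (ft F i)

/-- `q` is either a primitive root of unity of odd order (including `q = 1`)
or not a root of unity at all (and `q ≠ 0`). -/
def GoodParam (q : F) : Prop :=
  q ≠ 0 ∧ ((∃ m : ℕ, Odd m ∧ IsPrimitiveRoot q m) ∨ ∀ m : ℕ, 0 < m → q ^ m ≠ 1)

/-- `X_i^a` for an integer exponent `a ∈ ℤ`. -/
noncomputable def XZ (q : F) {n : ℕ} (i : Fin n) (a : ℤ) : H F q n :=
  if 0 ≤ a then X F q i ^ a.toNat else Xinv F q i ^ (-a).toNat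

/-- The monomial `X^α = X_1^{α_1} ⋯ X_n^{α_n}` for `α ∈ ℤ^n`. -/
noncomputable def Xmon (q : F) {n : ℕ} (α : Fin n → ℤ) : H F q n :=
  ((List.finRange n).map fun i => XZ F q i (α i)).prod

/-- The monomial `C^β = C_1^{β_1} ⋯ C_n^{β_n}` for `β ∈ {0,1}^n`. -/
noncomputable def Cmon (q : F) {n : ℕ} (β : Fin n → Bool) : H F q n :=
  ((List.finRange n).map fun i => if β i then C F q i else 1).prod

/-- The basic transposition `s_i = (i, i+1)` of `S_n`. -/
def s {n : ℕ} (i : Fin (n - 1)) : Equiv.Perm (Fin n) := Equiv.swap (lo i) (hi i)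

/-- The Coxeter length (number of inversions) of a permutation of `Fin n`. -/
def len {n : ℕ} (w : Equiv.Perm (Fin n)) : ℕ :=
  ((Finset.univ : Finset (Fin n × Fin n)).filter fun p => p.1 < p.2 ∧ w p.2 < w p.1).card

/-- `Tw` is the family of standard basis elements `T_w`, `w ∈ S_n`: it satisfies
`T_1 = 1`, `T_{s_i} = T_i`, and `T_{s_i w} = T_i T_w` whenever `ℓ(s_i w) = ℓ(w) + 1`.
These conditions determine the family uniquely. -/
def IsTFam (q : F) {n : ℕ} (Tw : Equiv.Perm (Fin n) → H F q n) : Prop :=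
  Tw 1 = 1 ∧ (∀ i : Fin (n - 1), Tw (s i) = T F q i) ∧
    ∀ (i : Fin (n - 1)) (w : Equiv.Perm (Fin n)),
      len (s i * w) = len w + 1 → Tw (s i * w) = T F q i * Tw w

/-- `h` is the quantum characteristic of `q`:  the smallest positive integer with
`q^{1-h} + q^{3-h} + ⋯ + q^{h-1} = 0`. -/
def qcharEq (q : F) (h : ℕ) : Prop :=
  0 < h ∧ (∑ k ∈ Finset.range h, q ^ (1 - (h : ℤ) + 2 * (k : ℤ))) = 0 ∧
    ∀ h' : ℕ, 0 < h' → h' < h →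
      (∑ k ∈ Finset.range h', q ^ (1 - (h' : ℤ) + 2 * (k : ℤ))) ≠ 0

/-- `i ∈ I = {0, 1, …, ℓ}` where `ℓ = (h-1)/2` (no condition if the quantum
characteristic is infinite). -/
def memI (q : F) (i : ℕ) : Prop := ∀ h : ℕ, qcharEq F q h → 2 * i + 1 ≤ h

/-- `q(i) = 2(q^{2i+1} + q^{-2i-1})/(q + q⁻¹)`. -/
noncomputable def qres (q : F) (i : ℕ) : F :=
  2 * (q ^ (2 * i + 1) + q⁻¹ ^ (2 * i + 1)) / (q + q⁻¹)

/-- Index of the block containing position `k` (0-based), for a composition given as a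
list of parts. -/
def blk : List ℕ → ℕ → ℕ
  | [], _ => 0
  | a :: rest, k => if k < a then 0 else blk rest (k - a) + 1

/-- Membership in the Young subgroup `S_μ ⊆ S_n`. -/
def InYoung {n : ℕ} (μ : List ℕ) (w : Equiv.Perm (Fin n)) : Prop :=
  ∀ k : Fin n, blk μ (w k).val = blk μ k.val

/-- `μ` is a composition of `n`. -/
def IsComposition (μ : List ℕ) (n : ℕ) : Prop := (∀ a ∈ μ, 0 < a) ∧ μ.sum = n

/-- The parabolic subalgebra generated by all `X_i^{±1}`, `C_i`, and the `T_j` with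
`j` in a set `J` of admissible indices. -/
def parabolicJ (q : F) {n : ℕ} (J : Set (Fin (n - 1))) : Subalgebra F (H F q n) :=
  Algebra.adjoin F
    ((Set.range fun i : Fin n => X F q i) ∪ (Set.range fun i : Fin n => Xinv F q i) ∪
      (Set.range fun i : Fin n => C F q i) ∪ {h | ∃ j ∈ J, h = T F q j})

/-- The parabolic subalgebra `H_μ` for a composition `μ`. -/
def parabolicC (q : F) {n : ℕ} (μ : List ℕ) : Subalgebra F (H F q n) :=
  parabolicJ F q {j | InYoung μ (s j)}

/-- The classical parabolic subalgebra `H^cl_μ`, generated by the `T_j` with `s_j ∈ S_μ`. -/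
def clparC (q : F) {n : ℕ} (μ : List ℕ) : Subalgebra F (H F q n) :=
  Algebra.adjoin F {h | ∃ j : Fin (n - 1), InYoung μ (s j) ∧ h = T F q j}

/-- The finite Hecke–Clifford subalgebra `H^fn_n`, generated by all `C_i` and `T_j`. -/
def Hfin (q : F) (n : ℕ) : Subalgebra F (H F q n) :=
  Algebra.adjoin F
    ((Set.range fun i : Fin n => C F q i) ∪ {h | ∃ j : Fin (n - 1), h = T F q j})

/-- `x` is a minimal length `(S_μ, S_ν)`-double coset representative. -/
def IsMinDC {n : ℕ} (μ ν : List ℕ) (x : Equiv.Perm (Fin n)) : Prop :=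
  ∀ u v : Equiv.Perm (Fin n), InYoung μ u → InYoung ν v → len x ≤ len (u * x * v)

/-- `w ∈ S_μ x S_ν`. -/
def InDC {n : ℕ} (μ ν : List ℕ) (x w : Equiv.Perm (Fin n)) : Prop :=
  ∃ u v : Equiv.Perm (Fin n), InYoung μ u ∧ InYoung ν v ∧ w = u * x * v

/-- A covering step in the Bruhat order: multiplication by a reflection increasing length. -/
def BruhatStep {n : ℕ} (v w : Equiv.Perm (Fin n)) : Prop :=
  ∃ a b : Fin n, a ≠ b ∧ w = Equiv.swap a b * v ∧ len v < len w

/-- The Bruhat order on `S_n`. -/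
def BruhatLE {n : ℕ} : Equiv.Perm (Fin n) → Equiv.Perm (Fin n) → Prop :=
  Relation.ReflTransGen BruhatStep

/-- The space of `A`-equivariant linear maps between two representations of the
`F`-algebra `A`. -/
def eqvHoms {A : Type} [Ring A] [Algebra F A] {M N : Type}
    [AddCommGroup M] [Module F M] [AddCommGroup N] [Module F N]
    (ρM : A →ₐ[F] Module.End F M) (ρN : A →ₐ[F] Module.End F N) :
    Submodule F (M →ₗ[F] N) where
  carrier := {f | ∀ (x : A) (m : M), f (ρM x m) = ρN x (f m)}
  add_mem' := by
    intro f g hf hg x m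
    simp only [LinearMap.add_apply, hf x m, hg x m, map_add]
  zero_mem' := by
    intro x m
    simp only [LinearMap.zero_apply, map_zero]
  smul_mem' := by
    intro c f hf x m
    simp only [LinearMap.smul_apply, hf x m, map_smul]

/-- `(E, ρE, ι)` is the module induced along the algebra morphism `φ : B →ₐ A` from
the `B`-representation `(M, ρ)`, i.e. `E = A ⊗_B M`, characterized by its universal
property. -/
def IsInducedAlong {A B : Type} [Ring A] [Ring B] [Algebra F A] [Algebra F B]
    (φ : B →ₐ[F] A) {M : Type} [AddCommGroup M] [Module F M]
    (ρ : B →ₐ[F] Module.End F M) {E : Type} [AddCommGroup E] [Module F E]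
    (ρE : A →ₐ[F] Module.End F E) (ι : M →ₗ[F] E) : Prop :=
  (∀ (b : B) (m : M), ι (ρ b m) = ρE (φ b) (ι m)) ∧
    ∀ (P : Type) [AddCommGroup P] [Module F P],
      ∀ (ρP : A →ₐ[F] Module.End F P) (f : M →ₗ[F] P),
        (∀ (b : B) (m : M), f (ρ b m) = ρP (φ b) (f m)) →
        ∃! g : E →ₗ[F] P,
          (∀ (x : A) (e : E), g (ρE x e) = ρP x (g e)) ∧ ∀ m : M, g (ι m) = f m

/-- `δ` is the grading automorphism of the superalgebra `H_n`
(identity on even generators, `-1` on the odd generators `C_i`). -/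
def IsGradingAut (q : F) {n : ℕ} (δ : H F q n →ₐ[F] H F q n) : Prop :=
  (∀ i : Fin n, δ (X F q i) = X F q i) ∧ (∀ i : Fin n, δ (Xinv F q i) = Xinv F q i) ∧
    (∀ i : Fin n, δ (C F q i) = -C F q i) ∧ ∀ i : Fin (n - 1), δ (T F q i) = T F q i

/-- `τ` is the antiautomorphism of `H_n` with `τ(T_i) = T_i + ξ C_i C_{i+1}`,
`τ(C_j) = C_j`, `τ(X_j) = X_j`. -/
def IsTauAntiAut (q : F) {n : ℕ} (τ : H F q n →ₗ[F] H F q n) : Prop :=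
  Function.Bijective τ ∧ (∀ a b : H F q n, τ (a * b) = τ b * τ a) ∧ τ 1 = 1 ∧
    (∀ i : Fin (n - 1),
      τ (T F q i) = T F q i + (q - q⁻¹) • (C F q (lo i) * C F q (hi i))) ∧
    (∀ j : Fin n, τ (C F q j) = C F q j) ∧ (∀ j : Fin n, τ (X F q j) = X F q j) ∧
    ∀ j : Fin n, τ (Xinv F q j) = Xinv F q j

/-- `ρ'` is the representation of the subalgebra `B` obtained from the
`H_ν`-representation `ρν` by twisting with the isomorphism `φ_{x⁻¹}`
(determined by `X_i ↦ X_{x⁻¹ i}`, `C_i ↦ C_{x⁻¹ i}`, `T_w ↦ T_{x⁻¹ w x}`). -/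
def IsTwistedRep (q : F) {n : ℕ} (ν : List ℕ) (x : Equiv.Perm (Fin n))
    (B : Subalgebra F (H F q n)) {M : Type} [AddCommGroup M] [Module F M]
    (ρν : ↥(parabolicC F q (n := n) ν) →ₐ[F] Module.End F M)
    (ρ' : ↥B →ₐ[F] Module.End F M) : Prop :=
  (∀ (i : Fin n) (a : ↥B) (b : ↥(parabolicC F q (n := n) ν)),
      (a : H F q n) = X F q i → (b : H F q n) = X F q (x⁻¹ i) → ρ' a = ρν b) ∧
  (∀ (i : Fin n) (a : ↥B) (b : ↥(parabolicC F q (n := n) ν)),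
      (a : H F q n) = Xinv F q i → (b : H F q n) = Xinv F q (x⁻¹ i) → ρ' a = ρν b) ∧
  (∀ (i : Fin n) (a : ↥B) (b : ↥(parabolicC F q (n := n) ν)),
      (a : H F q n) = C F q i → (b : H F q n) = C F q (x⁻¹ i) → ρ' a = ρν b) ∧
  ∀ (j j' : Fin (n - 1)) (a : ↥B) (b : ↥(parabolicC F q (n := n) ν)),
      lo j' = x⁻¹ (lo j) → (a : H F q n) = T F q j → (b : H F q n) = T F q j' → ρ' a = ρν b

/-- The element `f = a_d X_1^d + ⋯ + a_1 X_1 + a_0` of `H_n`. -/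
noncomputable def felem (q : F) (n d : ℕ) (aa : ℕ → F) : H F q n :=
  if h : 0 < n then ∑ i ∈ Finset.range (d + 1), aa i • X F q (⟨0, h⟩ : Fin n) ^ i else 0

/-- The conditions on the coefficients of `f`: degree `d ≥ 1`, monic, and
`a_i = a_0 a_{d-i}`. -/
def GoodPoly (d : ℕ) (aa : ℕ → F) : Prop :=
  1 ≤ d ∧ aa d = 1 ∧ (∀ i ≤ d, aa i = aa 0 * aa (d - i)) ∧ ∀ i : ℕ, d < i → aa i = 0

/-- The relation generating the two-sided ideal `I_f` of `H_n`. -/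
inductive CycRel (q : F) (n d : ℕ) (aa : ℕ → F) : H F q n → H F q n → Prop
  | rel : CycRel q n d aa (felem F q n d aa) 0

/-- The cyclotomic Hecke–Clifford superalgebra `H_n^f = H_n / I_f`. -/
abbrev Hf (q : F) (n d : ℕ) (aa : ℕ → F) : Type := RingQuot (CycRel F q n d aa)

/-- The canonical quotient map `H_n → H_n^f`. -/
noncomputable def cyc (q : F) (n d : ℕ) (aa : ℕ → F) : H F q n →ₐ[F] Hf F q n d aa :=
  RingQuot.mkAlgHom F (CycRel F q n d aa)

noncomputable def Xf (q : F) (n d : ℕ) (aa : ℕ → F) (i : Fin n) : Hf F q n d aa :=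
  cyc F q n d aa (X F q i)
noncomputable def Xinvf (q : F) (n d : ℕ) (aa : ℕ → F) (i : Fin n) : Hf F q n d aa :=
  cyc F q n d aa (Xinv F q i)
noncomputable def Cf (q : F) (n d : ℕ) (aa : ℕ → F) (i : Fin n) : Hf F q n d aa :=
  cyc F q n d aa (C F q i)
noncomputable def Tf (q : F) (n d : ℕ) (aa : ℕ → F) (i : Fin (n - 1)) : Hf F q n d aa :=
  cyc F q n d aa (T F q i)

/-- `e` is the canonical embedding `H_k^f → H_N^f` (shifting all indices by `sh`;
for `sh = 0` this is the standard identification of `H_k^f` with a subalgebra of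
`H_N^f`). -/
def IsCycEmb (q : F) (k N d : ℕ) (aa : ℕ → F) (sh : ℕ)
    (e : Hf F q k d aa →ₐ[F] Hf F q N d aa) : Prop :=
  (∀ (i : Fin k) (i' : Fin N), (i' : ℕ) = sh + (i : ℕ) →
      e (Xf F q k d aa i) = Xf F q N d aa i') ∧
  (∀ (i : Fin k) (i' : Fin N), (i' : ℕ) = sh + (i : ℕ) →
      e (Xinvf F q k d aa i) = Xinvf F q N d aa i') ∧
  (∀ (i : Fin k) (i' : Fin N), (i' : ℕ) = sh + (i : ℕ) →
      e (Cf F q k d aa i) = Cf F q N d aa i') ∧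
  ∀ (j : Fin (k - 1)) (j' : Fin (N - 1)), (j' : ℕ) = sh + (j : ℕ) →
      e (Tf F q k d aa j) = Tf F q N d aa j'

/-- `δ` is the grading automorphism of the superalgebra `H_n^f`. -/
def IsCycGrading (q : F) (n d : ℕ) (aa : ℕ → F)
    (δ : Hf F q n d aa →ₐ[F] Hf F q n d aa) : Prop :=
  (∀ i : Fin n, δ (Xf F q n d aa i) = Xf F q n d aa i) ∧
  (∀ i : Fin n, δ (Xinvf F q n d aa i) = Xinvf F q n d aa i) ∧
  (∀ i : Fin n, δ (Cf F q n d aa i) = -Cf F q n d aa i) ∧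
  ∀ j : Fin (n - 1), δ (Tf F q n d aa j) = Tf F q n d aa j

/-- The elements `f_1 = f`, `f_{i+1} = (T_i + ξ C_i C_{i+1}) f_i T_i` of `H_n`
(0-based indexing: `fseq k = f_{k+1}`). -/
noncomputable def fseq (q : F) (n d : ℕ) (aa : ℕ → F) : ℕ → H F q n
  | 0 => felem F q n d aa
  | k + 1 =>
    if h : k < n - 1 then
      (T F q (⟨k, h⟩ : Fin (n - 1)) +
          (q - q⁻¹) • (C F q (lo (⟨k, h⟩ : Fin (n - 1))) *
            C F q (hi (⟨k, h⟩ : Fin (n - 1))))) *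
        fseq q n d aa k * T F q (⟨k, h⟩ : Fin (n - 1))
    else 0

/-- `f_Z = f_{z_1} ⋯ f_{z_u}` for `Z = {z_1 < ⋯ < z_u} ⊆ {1,…,n}` (0-based). -/
noncomputable def fZ (q : F) (n d : ℕ) (aa : ℕ → F) (Z : Finset (Fin n)) : H F q n :=
  ((Z.sort (· ≤ ·)).map fun z => fseq F q n d aa (z : ℕ)).prod

/-- The evaluation of the monomial `∏ (X_i + X_i⁻¹)^{α_i}` in `H_n`. -/
noncomputable def evalSym (F : Type) [Field F] (q : F) {n : ℕ} (α : Fin n → ℕ) : H F q n :=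
  ((List.finRange n).map fun i => (X F q i + Xinv F q i) ^ α i).prod

/-!
`H_n` acts faithfully on functions of generic points: `X_i` multiplies by the `i`-th coordinate
`y_i`, `C_i` inverts this coordinate (with a sign), and `T_i` is the sum of an intertwining element,
which exchanges two coordinates, and a combination of Clifford elements whose coefficients are
rational functions of the coordinates. Write `u_i = X_i + X_i⁻¹`. A product of intertwining elements
moves some `u_j` across itself to another `u_k`, and on generic points these are separated by units,
so an element commuting with all `u_i` has no component along a nontrivial `T_w`. If it also
commutes with the `X_i` it contains no `C_i`, and if it moreover commutes with the `C_i` it is a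
polynomial in the `u_i`. Commuting with the `T_i` is then commuting with the intertwining elements,
which act by transpositions on such polynomials. The same peeling, started from the fact that
polynomials in the `u_i` are determined by their values at generic points, proves faithfulness.
-/

section LeftSpan

variable {R A : Type*} [CommRing R] [Ring A] [Algebra R A]

theorem mul_mem_of_mem_adjoin_left {N : Submodule R A} {s : Set A}
    (h : ∀ g ∈ s, ∀ a ∈ N, g * a ∈ N) {x : A} (hx : x ∈ Algebra.adjoin R s) :
    ∀ a ∈ N, x * a ∈ N := by
  induction hx using Algebra.adjoin_induction with
  | mem x hx => exact h x hx
  | algebraMap r => exact fun a ha => Algebra.smul_def r a ▸ N.smul_mem r ha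
  | add x y _ _ hx hy => exact fun a ha => add_mul x y a ▸ N.add_mem (hx a ha) (hy a ha)
  | mul x y _ _ hx hy => exact fun a ha => (mul_assoc x y a).symm ▸ hx _ (hy a ha)

theorem mul_mem_of_mem_adjoin_right {N : Submodule R A} {s : Set A}
    (h : ∀ g ∈ s, ∀ a ∈ N, a * g ∈ N) {x : A} (hx : x ∈ Algebra.adjoin R s) :
    ∀ a ∈ N, a * x ∈ N := by
  induction hx using Algebra.adjoin_induction with
  | mem x hx => exact h x hx
  | algebraMap r =>
    exact fun a ha => (Algebra.commutes r a) ▸ Algebra.smul_def r a ▸ N.smul_mem r ha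
  | add x y _ _ hx hy => exact fun a ha => mul_add a x y ▸ N.add_mem (hx a ha) (hy a ha)
  | mul x y _ _ hx hy => exact fun a ha => mul_assoc a x y ▸ hy _ (hx a ha)

/-- The left `S`-submodule `S + S e` of an algebra, for a subalgebra `S` and an element `e`. -/
def leftSpanPair (S : Subalgebra R A) (e : A) : Submodule R A :=
  Subalgebra.toSubmodule S ⊔ Subalgebra.toSubmodule S * Submodule.span R {e}

variable {S : Subalgebra R A} {e : A}

theorem mem_leftSpanPair {z : A} : z ∈ leftSpanPair S e ↔ ∃ a ∈ S, ∃ b ∈ S, a + b * e = z := by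
  simp only [leftSpanPair, Submodule.mem_sup, Submodule.mem_mul_span_singleton,
    Subalgebra.mem_toSubmodule, exists_exists_and_eq_and]

theorem self_mem_leftSpanPair {a : A} (ha : a ∈ S) : a ∈ leftSpanPair S e :=
  mem_leftSpanPair.2 ⟨a, ha, 0, S.zero_mem, by rw [zero_mul, add_zero]⟩

theorem mul_mem_leftSpanPair {b : A} (hb : b ∈ S) : b * e ∈ leftSpanPair S e :=
  mem_leftSpanPair.2 ⟨0, S.zero_mem, b, hb, zero_add _⟩

theorem leftSpanPair_mul_left {a z : A} (ha : a ∈ S) (hz : z ∈ leftSpanPair S e) :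
    a * z ∈ leftSpanPair S e := by
  obtain ⟨b, hb, c, hc, rfl⟩ := mem_leftSpanPair.1 hz
  exact mem_leftSpanPair.2
    ⟨a * b, S.mul_mem ha hb, a * c, S.mul_mem ha hc, by rw [mul_add, mul_assoc]⟩

theorem mul_mul_mem_leftSpanPair {x y : A} (hx : e * x ∈ leftSpanPair S e) (hy : y ∈ S)
    (hey : e * y ∈ leftSpanPair S e) : e * (x * y) ∈ leftSpanPair S e := by
  obtain ⟨a, ha, b, hb, hab⟩ := mem_leftSpanPair.1 hx
  rw [← mul_assoc, ← hab, add_mul, mul_assoc]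
  exact add_mem (self_mem_leftSpanPair (mul_mem ha hy)) (leftSpanPair_mul_left hb hey)

theorem mul_mem_leftSpanPair_of_adjoin {s : Set A}
    (h : ∀ g ∈ s, e * g ∈ leftSpanPair (Algebra.adjoin R s) e) {x : A}
    (hx : x ∈ Algebra.adjoin R s) : e * x ∈ leftSpanPair (Algebra.adjoin R s) e := by
  induction hx using Algebra.adjoin_induction with
  | mem x hx => exact h x hx
  | algebraMap r =>
    exact Algebra.commutes r e ▸ mul_mem_leftSpanPair (Subalgebra.algebraMap_mem _ r)
  | add x y _ _ hx hy => exact mul_add e x y ▸ add_mem hx hy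
  | mul x y _ hyS hx hy => exact mul_mul_mem_leftSpanPair hx hyS hy

theorem adjoin_le_leftSpanPair {s t : Set A}
    (hs : ∀ g ∈ s, e * g ∈ leftSpanPair (Algebra.adjoin R s) e)
    (he : e * e ∈ leftSpanPair (Algebra.adjoin R s) e) (ht : t ⊆ insert e s) :
    Subalgebra.toSubmodule (Algebra.adjoin R t) ≤ leftSpanPair (Algebra.adjoin R s) e := by
  intro x hx
  rw [← mul_one x]
  refine mul_mem_of_mem_adjoin_left (fun g hg a ha => ?_) hx 1 (self_mem_leftSpanPair (one_mem _))
  rcases ht hg with rfl | hgs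
  · obtain ⟨b, hb, c, hc, rfl⟩ := mem_leftSpanPair.1 ha
    obtain ⟨b', hb', c', hc', h⟩ := mem_leftSpanPair.1 (mul_mem_leftSpanPair_of_adjoin hs hc)
    rw [mul_add, ← mul_assoc, ← h, add_mul, mul_assoc]
    exact add_mem (mul_mem_leftSpanPair_of_adjoin hs hb)
      (add_mem (mul_mem_leftSpanPair hb') (leftSpanPair_mul_left hc' he))
  · exact leftSpanPair_mul_left (Algebra.subset_adjoin hgs) ha

end LeftSpan

section RankTwo

variable {R A : Type*} [CommRing R] [Ring A] [Algebra R A] {ξ : R} {t c d x y : A}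

theorem mul_sub_algebraMap_eq_one (ht : t * t = ξ • t + 1) : t * (t - algebraMap R A ξ) = 1 := by
  rw [mul_sub, ht, ← Algebra.commutes, ← Algebra.smul_def, add_sub_cancel_left]

theorem sub_algebraMap_mul_eq_one (ht : t * t = ξ • t + 1) : (t - algebraMap R A ξ) * t = 1 := by
  rw [sub_mul, ht, ← Algebra.smul_def, add_sub_cancel_left]

theorem mul_eq_of_quadratic_of_mul_eq (ht : t * t = ξ • t + 1) (htc : t * c = d * t) :
    t * d = c * t - ξ • c + ξ • d := by
  have h : (t - algebraMap R A ξ) * d = c * (t - algebraMap R A ξ) := by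
    calc (t - algebraMap R A ξ) * d
        = (t - algebraMap R A ξ) * (d * t) * (t - algebraMap R A ξ) := by
          rw [mul_assoc, mul_assoc, mul_sub_algebraMap_eq_one ht, mul_one]
      _ = c * (t - algebraMap R A ξ) := by
          rw [← htc, ← mul_assoc, sub_algebraMap_mul_eq_one ht, one_mul]
  rw [sub_mul, mul_sub, ← Algebra.commutes, ← Algebra.smul_def, ← Algebra.smul_def] at h
  rw [← h, sub_add_cancel]

theorem mul_mul_mul_self_of_anticommute (hc : c * c = 1) (hd : d * d = 1)
    (hcd : c * d = -(d * c)) : c * d * (c * d) = -1 := by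
  calc c * d * (c * d) = c * d * -(d * c) := by rw [← hcd]
    _ = -(c * (d * d) * c) := by noncomm_ring
    _ = -1 := by rw [hd, mul_one, hc]

theorem quadratic_add_smul_mul (ht : t * t = ξ • t + 1) (htc : t * c = d * t) (hc : c * c = 1)
    (hd : d * d = 1) (hcd : c * d = -(d * c)) :
    (t + ξ • (c * d)) * (t + ξ • (c * d)) = ξ • (t + ξ • (c * d)) + 1 := by
  have htcd : t * (c * d) = -(c * d * t) + ξ • (c * d) + ξ • 1 := by
    calc t * (c * d) = d * (c * t - ξ • c + ξ • d) := by
          rw [← mul_assoc, htc, mul_assoc, mul_eq_of_quadratic_of_mul_eq ht htc]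
      _ = d * c * t - ξ • (d * c) + ξ • (d * d) := by
          simp only [mul_add, mul_sub, mul_smul_comm, mul_assoc]
      _ = -(c * d * t) + ξ • (c * d) + ξ • 1 := by
          rw [hd, hcd, smul_neg, neg_mul, neg_neg, sub_eq_add_neg]
  rw [add_mul, mul_add, mul_add, ht, mul_smul_comm, htcd, smul_mul_assoc, smul_mul_smul_comm,
    mul_mul_mul_self_of_anticommute hc hd hcd]
  module

theorem mul_eq_of_cross_left (ht : t * t = ξ • t + 1)
    (hx : (t + ξ • (c * d)) * x * t = y) :
    t * x = y * t - ξ • y - ξ • (c * d * x) := by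
  have h : (t + ξ • (c * d)) * x = y * (t - algebraMap R A ξ) := by
    rw [← hx, mul_assoc, mul_sub_algebraMap_eq_one ht, mul_one]
  rw [add_mul, mul_sub, ← Algebra.commutes, ← Algebra.smul_def, smul_mul_assoc] at h
  rw [← h, add_sub_cancel_right]

theorem mul_eq_of_cross_right (ht : t * t = ξ • t + 1) (htc : t * c = d * t) (hc : c * c = 1)
    (hd : d * d = 1) (hcd : c * d = -(d * c)) (hx : (t + ξ • (c * d)) * x * t = y) :
    t * y = x * t + ξ • y - ξ • (c * d * y) := by
  have h : (t + ξ • (c * d)) * y = ξ • y + x * t := by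
    rw [← hx, ← mul_assoc, ← mul_assoc, quadratic_add_smul_mul ht htc hc hd hcd, mul_assoc,
      add_mul, one_mul, smul_mul_assoc, mul_assoc]
  rw [add_mul, smul_mul_assoc] at h
  rw [eq_sub_iff_add_eq, h, add_comm]

end RankTwo

section Relations

variable {F}
variable {q : F} {n : ℕ}

theorem X_mul_Xinv (i : Fin n) : X F q i * Xinv F q i = 1 := by
  simpa [X, Xinv] using RingQuot.mkAlgHom_rel F (Rel.XXinv (q := q) i)

theorem Xinv_mul_X (i : Fin n) : Xinv F q i * X F q i = 1 := by
  simpa [X, Xinv] using RingQuot.mkAlgHom_rel F (Rel.XinvX (q := q) i)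

theorem commute_X_X (i j : Fin n) : Commute (X F q i) (X F q j) := by
  simpa [commute_iff_eq, X] using RingQuot.mkAlgHom_rel F (Rel.XX (q := q) i j)

theorem commute_Xinv_Xinv (i j : Fin n) : Commute (Xinv F q i) (Xinv F q j) := by
  simpa [commute_iff_eq, Xinv] using RingQuot.mkAlgHom_rel F (Rel.XiXi (q := q) i j)

theorem commute_X_Xinv (i j : Fin n) : Commute (X F q i) (Xinv F q j) := by
  by_cases h : i = j
  · subst h
    rw [Commute, SemiconjBy, X_mul_Xinv, Xinv_mul_X]
  · simpa [commute_iff_eq, X, Xinv] using RingQuot.mkAlgHom_rel F (Rel.XXi (q := q) i j h)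

theorem C_mul_self (i : Fin n) : C F q i * C F q i = 1 := by
  simpa [C] using RingQuot.mkAlgHom_rel F (Rel.CC (q := q) i)

theorem C_mul_C {i j : Fin n} (h : i ≠ j) : C F q i * C F q j = -(C F q j * C F q i) := by
  simpa [C] using RingQuot.mkAlgHom_rel F (Rel.Canti (q := q) i j h)

theorem C_mul_X (i : Fin n) : C F q i * X F q i = Xinv F q i * C F q i := by
  simpa [C, X, Xinv] using RingQuot.mkAlgHom_rel F (Rel.CX (q := q) i)

theorem C_mul_Xinv (i : Fin n) : C F q i * Xinv F q i = X F q i * C F q i := by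
  simpa [C, X, Xinv] using RingQuot.mkAlgHom_rel F (Rel.CXi (q := q) i)

theorem commute_C_X {i j : Fin n} (h : i ≠ j) : Commute (C F q i) (X F q j) := by
  simpa [commute_iff_eq, C, X] using RingQuot.mkAlgHom_rel F (Rel.CXo (q := q) i j h)

theorem commute_C_Xinv {i j : Fin n} (h : i ≠ j) : Commute (C F q i) (Xinv F q j) := by
  simpa [commute_iff_eq, C, Xinv] using RingQuot.mkAlgHom_rel F (Rel.CXio (q := q) i j h)

theorem T_mul_self (i : Fin (n - 1)) : T F q i * T F q i = (q - q⁻¹) • T F q i + 1 := by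
  simpa only [T, map_mul, map_add, map_smul, map_one] using
    RingQuot.mkAlgHom_rel F (Rel.Tquad (q := q) i)

theorem T_braid {i j : Fin (n - 1)} (h : (j : ℕ) = i + 1) :
    T F q i * T F q j * T F q i = T F q j * T F q i * T F q j := by
  simpa [T] using RingQuot.mkAlgHom_rel F (Rel.Tbraid (q := q) i j h)

theorem commute_T_T {i j : Fin (n - 1)} (h : (i : ℕ) + 1 < j) :
    Commute (T F q i) (T F q j) := by
  simpa [commute_iff_eq, T] using RingQuot.mkAlgHom_rel F (Rel.TTfar (q := q) i j h)

theorem T_mul_C_lo (i : Fin (n - 1)) : T F q i * C F q (lo i) = C F q (hi i) * T F q i := by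
  simpa [T, C] using RingQuot.mkAlgHom_rel F (Rel.TC (q := q) i)

theorem commute_T_C {i : Fin (n - 1)} {j : Fin n} (h1 : j ≠ lo i) (h2 : j ≠ hi i) :
    Commute (T F q i) (C F q j) := by
  simpa [commute_iff_eq, T, C] using RingQuot.mkAlgHom_rel F (Rel.TCo (q := q) i j h1 h2)

theorem commute_T_X {i : Fin (n - 1)} {j : Fin n} (h1 : j ≠ lo i) (h2 : j ≠ hi i) :
    Commute (T F q i) (X F q j) := by
  simpa [commute_iff_eq, T, X] using RingQuot.mkAlgHom_rel F (Rel.TXo (q := q) i j h1 h2)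

theorem commute_T_Xinv {i : Fin (n - 1)} {j : Fin n} (h1 : j ≠ lo i) (h2 : j ≠ hi i) :
    Commute (T F q i) (Xinv F q j) := by
  simpa [commute_iff_eq, T, Xinv] using RingQuot.mkAlgHom_rel F (Rel.TXio (q := q) i j h1 h2)

theorem T_cross (i : Fin (n - 1)) :
    (T F q i + (q - q⁻¹) • (C F q (lo i) * C F q (hi i))) * X F q (lo i) * T F q i =
      X F q (hi i) := by
  simpa only [T, C, X, map_mul, map_add, map_smul] using
    RingQuot.mkAlgHom_rel F (Rel.cross (q := q) i)

variable (q) in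
/-- The element `X_i + X_i⁻¹` of `H_n`. -/
noncomputable def U (i : Fin n) : H F q n :=
  X F q i + Xinv F q i

theorem commute_X_U (i j : Fin n) : Commute (X F q i) (U q j) :=
  (commute_X_X i j).add_right (commute_X_Xinv i j)

theorem commute_Xinv_U (i j : Fin n) : Commute (Xinv F q i) (U q j) :=
  (commute_X_Xinv j i).symm.add_right (commute_Xinv_Xinv i j)

theorem commute_U_U (i j : Fin n) : Commute (U q i) (U q j) :=
  (commute_X_U i j).add_left (commute_Xinv_U i j)

theorem commute_C_U (i j : Fin n) : Commute (C F q i) (U q j) := by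
  by_cases h : i = j
  · subst h
    rw [Commute, SemiconjBy, U, mul_add, add_mul, C_mul_X, C_mul_Xinv, add_comm]
  · exact (commute_C_X h).add_right (commute_C_Xinv h)

theorem commute_T_U {i : Fin (n - 1)} {j : Fin n} (hlo : j ≠ lo i) (hhi : j ≠ hi i) :
    Commute (T F q i) (U q j) :=
  (commute_T_X hlo hhi).add_right (commute_T_Xinv hlo hhi)

theorem X_mul_self (i : Fin n) : X F q i * X F q i = U q i * X F q i - 1 := by
  rw [U, add_mul, Xinv_mul_X, add_sub_cancel_right]

theorem Xinv_eq_C_mul_X_mul_C (i : Fin n) : Xinv F q i = C F q i * (X F q i * C F q i) := by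
  rw [← mul_assoc, C_mul_X, mul_assoc, C_mul_self, mul_one]

theorem lo_ne_hi (i : Fin (n - 1)) : lo i ≠ hi i := by
  simp [lo, hi]

theorem T_mul_C_hi (i : Fin (n - 1)) :
    T F q i * C F q (hi i) = C F q (lo i) * T F q i - (q - q⁻¹) • C F q (lo i)
      + (q - q⁻¹) • C F q (hi i) :=
  mul_eq_of_quadratic_of_mul_eq (T_mul_self i) (T_mul_C_lo i)

theorem T_mul_X_lo (i : Fin (n - 1)) :
    T F q i * X F q (lo i) = X F q (hi i) * T F q i - (q - q⁻¹) • X F q (hi i)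
      - (q - q⁻¹) • (C F q (lo i) * C F q (hi i) * X F q (lo i)) :=
  mul_eq_of_cross_left (T_mul_self i) (T_cross i)

theorem T_mul_X_hi (i : Fin (n - 1)) :
    T F q i * X F q (hi i) = X F q (lo i) * T F q i + (q - q⁻¹) • X F q (hi i)
      - (q - q⁻¹) • (C F q (lo i) * C F q (hi i) * X F q (hi i)) :=
  mul_eq_of_cross_right (T_mul_self i) (T_mul_C_lo i) (C_mul_self _) (C_mul_self _)
    (C_mul_C (lo_ne_hi i)) (T_cross i)

end Relations

section Subalgebras

variable {F}
variable (q : F) (n : ℕ)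

/-- The image in `H_n` of a generator. -/
noncomputable def gen (g : Gen n) : H F q n :=
  RingQuot.mkAlgHom F (Rel F q n) (FreeAlgebra.ι F g)

theorem adjoin_range_gen : Algebra.adjoin F (Set.range (gen q (n := n))) = ⊤ := by
  have h := congrArg (Subalgebra.map (RingQuot.mkAlgHom F (Rel F q n)))
    (FreeAlgebra.adjoin_range_ι (R := F) (X := Gen n))
  rwa [AlgHom.map_adjoin, ← Set.range_comp, Algebra.map_top,
    (AlgHom.range_eq_top _).2 (RingQuot.mkAlgHom_surjective F (Rel F q n))] at h

/-- The subalgebra of `H_n` generated by all `X_i + X_i⁻¹` and by the first `k` of the `X_j`. -/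
noncomputable def polySubalgebra (k : ℕ) : Subalgebra F (H F q n) :=
  Algebra.adjoin F (Set.range (U q) ∪ {x | ∃ j : Fin n, (j : ℕ) < k ∧ x = X F q j})

/-- The subalgebra of `H_n` generated by all `X_i^{±1}` and by the first `k` of the `C_j`. -/
noncomputable def cliffordSubalgebra (k : ℕ) : Subalgebra F (H F q n) :=
  Algebra.adjoin F (Set.range (X F q) ∪ Set.range (Xinv F q) ∪
    {x | ∃ j : Fin n, (j : ℕ) < k ∧ x = C F q j})

/-- The subalgebra of `H_n` generated by the first `m` of the `T_i`. -/
noncomputable def heckeSubalgebra (m : ℕ) : Subalgebra F (H F q n) :=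
  Algebra.adjoin F {x | ∃ j : Fin (n - 1), (j : ℕ) < m ∧ x = T F q j}

/-- The span of the products `a * b` with `a` in the subalgebra generated by the `X_i^{±1}` and
`C_i`, and `b` in the subalgebra generated by the first `m` of the `T_i`. -/
noncomputable def cliffordHeckeSpan (m : ℕ) : Submodule F (H F q n) :=
  Subalgebra.toSubmodule (cliffordSubalgebra q n n) *
    Subalgebra.toSubmodule (heckeSubalgebra q n m)

variable {q n}

theorem U_mem_polySubalgebra (i : Fin n) (k : ℕ) : U q i ∈ polySubalgebra q n k :=
  Algebra.subset_adjoin (Or.inl ⟨i, rfl⟩)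

theorem X_mem_polySubalgebra {i : Fin n} {k : ℕ} (h : (i : ℕ) < k) :
    X F q i ∈ polySubalgebra q n k :=
  Algebra.subset_adjoin (Or.inr ⟨i, h, rfl⟩)

theorem X_mem_cliffordSubalgebra (i : Fin n) (k : ℕ) : X F q i ∈ cliffordSubalgebra q n k :=
  Algebra.subset_adjoin (Or.inl (Or.inl ⟨i, rfl⟩))

theorem Xinv_mem_cliffordSubalgebra (i : Fin n) (k : ℕ) :
    Xinv F q i ∈ cliffordSubalgebra q n k :=
  Algebra.subset_adjoin (Or.inl (Or.inr ⟨i, rfl⟩))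

theorem C_mem_cliffordSubalgebra {i : Fin n} {k : ℕ} (h : (i : ℕ) < k) :
    C F q i ∈ cliffordSubalgebra q n k :=
  Algebra.subset_adjoin (Or.inr ⟨i, h, rfl⟩)

theorem T_mem_heckeSubalgebra {i : Fin (n - 1)} {m : ℕ} (h : (i : ℕ) < m) :
    T F q i ∈ heckeSubalgebra q n m :=
  Algebra.subset_adjoin ⟨i, h, rfl⟩

theorem commute_X_of_mem_polySubalgebra (i : Fin n) {k : ℕ} {x : H F q n}
    (hx : x ∈ polySubalgebra q n k) : Commute (X F q i) x := by
  refine Algebra.commute_of_mem_adjoin_of_forall_mem_commute hx ?_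
  rintro _ (⟨j, rfl⟩ | ⟨j, _, rfl⟩)
  exacts [commute_X_U i j, commute_X_X i j]

theorem commute_C_of_mem_polySubalgebra {i : Fin n} {k : ℕ} (h : k ≤ i) {x : H F q n}
    (hx : x ∈ polySubalgebra q n k) : Commute (C F q i) x := by
  refine Algebra.commute_of_mem_adjoin_of_forall_mem_commute hx ?_
  rintro _ (⟨j, rfl⟩ | ⟨j, hj, rfl⟩)
  exacts [commute_C_U i j, commute_C_X (by rintro rfl; omega)]

theorem commute_X_of_mem_cliffordSubalgebra {i : Fin n} {k : ℕ} (h : k ≤ i) {x : H F q n}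
    (hx : x ∈ cliffordSubalgebra q n k) : Commute (X F q i) x := by
  refine Algebra.commute_of_mem_adjoin_of_forall_mem_commute hx ?_
  rintro _ ((⟨j, rfl⟩ | ⟨j, rfl⟩) | ⟨j, hj, rfl⟩)
  exacts [commute_X_X i j, commute_X_Xinv i j, (commute_C_X (by rintro rfl; omega)).symm]

theorem commute_U_of_mem_cliffordSubalgebra (i : Fin n) {k : ℕ} {x : H F q n}
    (hx : x ∈ cliffordSubalgebra q n k) : Commute (U q i) x := by
  refine Algebra.commute_of_mem_adjoin_of_forall_mem_commute hx ?_
  rintro _ ((⟨j, rfl⟩ | ⟨j, rfl⟩) | ⟨j, -, rfl⟩)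
  exacts [(commute_X_U j i).symm, (commute_Xinv_U j i).symm, (commute_C_U j i).symm]

theorem commute_U_of_mem_heckeSubalgebra {i : Fin n} {m : ℕ} (h : m < i) {x : H F q n}
    (hx : x ∈ heckeSubalgebra q n m) : Commute (U q i) x := by
  refine Algebra.commute_of_mem_adjoin_of_forall_mem_commute hx ?_
  rintro _ ⟨j, hj, rfl⟩
  refine (commute_T_U ?_ ?_).symm <;> rintro rfl <;> simp only [lo, hi] at h <;> omega

theorem commute_U_of_mem_cliffordHeckeSpan {i : Fin n} {m : ℕ} (h : m < i) {x : H F q n}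
    (hx : x ∈ cliffordHeckeSpan q n m) : Commute (U q i) x :=
  Submodule.mul_induction_on hx
    (fun _ ha _ hb => (commute_U_of_mem_cliffordSubalgebra i ha).mul_right
      (commute_U_of_mem_heckeSubalgebra h hb))
    fun _ _ hx hy => hx.add_right hy

theorem list_prod_map_mul_of_commute {ι M : Type*} [Monoid M] {f g : ι → M}
    (h : ∀ i j, Commute (f i) (g j)) (l : List ι) :
    (l.map fun i => f i * g i).prod = (l.map f).prod * (l.map g).prod := by
  induction l with
  | nil => simp
  | cons i l ih =>
    have hl : Commute (g i) (l.map f).prod := Commute.list_prod_right _ _ fun y hy => by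
      obtain ⟨j, _, rfl⟩ := List.mem_map.1 hy
      exact (h j i).symm
    simp only [List.map_cons, List.prod_cons]
    rw [ih, mul_assoc, ← mul_assoc (g i), hl.eq, mul_assoc, mul_assoc]

theorem evalSym_zero : evalSym F q (0 : Fin n → ℕ) = 1 := by
  simp [evalSym]

theorem evalSym_add (α β : Fin n → ℕ) :
    evalSym F q (α + β) = evalSym F q α * evalSym F q β := by
  simp only [evalSym, Pi.add_apply, pow_add]
  exact list_prod_map_mul_of_commute (fun i j => (commute_U_U i j).pow_pow _ _) _

theorem evalSym_single (k : Fin n) : evalSym F q (Pi.single k 1) = U q k := by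
  rw [evalSym, List.prod_map_eq_pow_single k _ fun i hik _ => by
      rw [Pi.single_eq_of_ne hik, pow_zero],
    List.count_eq_one_of_mem (List.nodup_finRange n) (List.mem_finRange k), pow_one,
    Pi.single_eq_same, pow_one, U]

theorem polySubalgebra_zero_le_span_evalSym :
    Subalgebra.toSubmodule (polySubalgebra q n 0) ≤
      Submodule.span F (Set.range (evalSym F q (n := n))) := by
  rw [polySubalgebra, Algebra.adjoin_eq_span]
  refine Submodule.span_mono fun x hx => ?_
  induction hx using Submonoid.closure_induction with
  | mem x hx =>
    rcases hx with ⟨k, rfl⟩ | ⟨k, hk, _⟩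
    · exact ⟨_, evalSym_single k⟩
    · exact absurd hk (Nat.not_lt_zero _)
  | one => exact ⟨0, evalSym_zero⟩
  | mul x y _ _ hx hy =>
    obtain ⟨α, rfl⟩ := hx
    obtain ⟨β, rfl⟩ := hy
    exact ⟨α + β, evalSym_add α β⟩

theorem polySubalgebra_succ_le {k : ℕ} (hk : k < n) :
    Subalgebra.toSubmodule (polySubalgebra q n (k + 1)) ≤
      leftSpanPair (polySubalgebra q n k) (X F q ⟨k, hk⟩) := by
  refine adjoin_le_leftSpanPair (fun g hg => ?_) ?_ ?_
  · have hg := Algebra.subset_adjoin (R := F) hg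
    exact (commute_X_of_mem_polySubalgebra ⟨k, hk⟩ hg).eq ▸ mul_mem_leftSpanPair hg
  · rw [X_mul_self]
    exact sub_mem (mul_mem_leftSpanPair (U_mem_polySubalgebra _ k))
      (self_mem_leftSpanPair (one_mem _))
  · rintro _ (⟨j, rfl⟩ | ⟨j, hj, rfl⟩)
    · exact Or.inr (Or.inl ⟨j, rfl⟩)
    · rcases (Nat.lt_succ_iff_lt_or_eq.1 hj) with hj | rfl
      exacts [Or.inr (Or.inr ⟨j, hj, rfl⟩), Or.inl rfl]

theorem cliffordSubalgebra_succ_le {k : ℕ} (hk : k < n) :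
    Subalgebra.toSubmodule (cliffordSubalgebra q n (k + 1)) ≤
      leftSpanPair (cliffordSubalgebra q n k) (C F q ⟨k, hk⟩) := by
  refine adjoin_le_leftSpanPair ?_ ?_ ?_
  · rintro _ ((⟨j, rfl⟩ | ⟨j, rfl⟩) | ⟨j, hj, rfl⟩)
    · by_cases h : ⟨k, hk⟩ = j
      · rw [h, C_mul_X]
        exact mul_mem_leftSpanPair (Xinv_mem_cliffordSubalgebra j k)
      · exact (commute_C_X (q := q) h).eq ▸ mul_mem_leftSpanPair (X_mem_cliffordSubalgebra j k)
    · by_cases h : ⟨k, hk⟩ = j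
      · rw [h, C_mul_Xinv]
        exact mul_mem_leftSpanPair (X_mem_cliffordSubalgebra j k)
      · exact (commute_C_Xinv (q := q) h).eq ▸
          mul_mem_leftSpanPair (Xinv_mem_cliffordSubalgebra j k)
    · have h : (⟨k, hk⟩ : Fin n) ≠ j := fun h => hj.ne (congrArg Fin.val h).symm
      exact C_mul_C (q := q) h ▸ neg_mem (mul_mem_leftSpanPair (C_mem_cliffordSubalgebra hj))
  · exact C_mul_self (q := q) ⟨k, hk⟩ ▸ self_mem_leftSpanPair (one_mem _)
  · rintro _ ((⟨j, rfl⟩ | ⟨j, rfl⟩) | ⟨j, hj, rfl⟩)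
    · exact Or.inr (Or.inl (Or.inl ⟨j, rfl⟩))
    · exact Or.inr (Or.inl (Or.inr ⟨j, rfl⟩))
    · rcases (Nat.lt_succ_iff_lt_or_eq.1 hj) with hj | rfl
      exacts [Or.inr (Or.inr ⟨j, hj, rfl⟩), Or.inl rfl]

theorem cliffordSubalgebra_zero_le : cliffordSubalgebra q n 0 ≤ polySubalgebra q n n := by
  refine Algebra.adjoin_le ?_
  rintro _ ((⟨j, rfl⟩ | ⟨j, rfl⟩) | ⟨j, hj, rfl⟩)
  · exact X_mem_polySubalgebra j.isLt
  · rw [show Xinv F q j = U q j - X F q j from (add_sub_cancel_left _ _).symm]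
    exact sub_mem (U_mem_polySubalgebra _ _) (X_mem_polySubalgebra j.isLt)
  · exact absurd hj (Nat.not_lt_zero _)

theorem cliffordHeckeSpan_zero :
    cliffordHeckeSpan q n 0 = Subalgebra.toSubmodule (cliffordSubalgebra q n n) := by
  simp [cliffordHeckeSpan, heckeSubalgebra, Algebra.toSubmodule_bot]

end Subalgebras

section HeckeSpanning

variable {F}
variable (q : F) (n : ℕ)

/-- `T_i` indexed by natural numbers, with value `1` outside the range of indices. -/
noncomputable def Tnat (i : ℕ) : H F q n :=
  if h : i < n - 1 then T F q ⟨i, h⟩ else 1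

/-- The descending product `T_m T_{m-1} ⋯` with `d` factors. These elements, for `d ≤ m + 1`,
represent the cosets of the subalgebra generated by the first `m` of the `T_i` in the one generated
by the first `m + 1` of them. -/
noncomputable def Tdesc (m : ℕ) : ℕ → H F q n
  | 0 => 1
  | d + 1 => Tdesc m d * Tnat q n (m - d)

variable {q n}

theorem Tnat_eq {i : ℕ} (h : i < n - 1) : Tnat q n i = T F q ⟨i, h⟩ := dif_pos h

theorem commute_Tnat {i j : ℕ} (h : i + 1 < j) : Commute (Tnat q n i) (Tnat q n j) := by
  unfold Tnat
  split_ifs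
  exacts [commute_T_T h, Commute.one_right _, Commute.one_left _, Commute.one_left _]

theorem Tnat_braid {i : ℕ} (h : i + 1 < n - 1) :
    Tnat q n (i + 1) * Tnat q n i * Tnat q n (i + 1) =
      Tnat q n i * Tnat q n (i + 1) * Tnat q n i := by
  rw [Tnat_eq h, Tnat_eq (by omega : i < n - 1)]
  exact (T_braid rfl).symm

theorem Tnat_mul_self {i : ℕ} (h : i < n - 1) :
    Tnat q n i * Tnat q n i = (q - q⁻¹) • Tnat q n i + 1 := by
  rw [Tnat_eq h, T_mul_self]

theorem Tnat_mem_heckeSubalgebra {i m : ℕ} (h : i < m) : Tnat q n i ∈ heckeSubalgebra q n m := by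
  unfold Tnat
  split_ifs
  exacts [T_mem_heckeSubalgebra h, one_mem _]

theorem commute_Tnat_Tdesc {m i d : ℕ} (h : i + d < m) :
    Commute (Tnat q n i) (Tdesc q n m d) := by
  induction d with
  | zero => exact Commute.one_right _
  | succ d ih => exact (ih (by omega)).mul_right (commute_Tnat (by omega))

theorem Tdesc_mul_Tnat {m i d : ℕ} (hm : m < n - 1) (hi : i + 1 ≤ m) (h : m + 1 ≤ i + d)
    (hd : d ≤ m + 1) : Tdesc q n m d * Tnat q n (i + 1) = Tnat q n i * Tdesc q n m d := by
  obtain ⟨e, rfl⟩ : ∃ e, d = e + (m - i) + 1 := ⟨d + i - (m + 1), by omega⟩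
  clear h
  induction e with
  | zero =>
    obtain ⟨e, rfl⟩ : ∃ e, m = i + 1 + e := ⟨m - (i + 1), by omega⟩
    have hTdesc : Tdesc q n (i + 1 + e) (0 + (i + 1 + e - i) + 1) =
        Tdesc q n (i + 1 + e) e * (Tnat q n (i + 1) * Tnat q n i) := by
      rw [show 0 + (i + 1 + e - i) + 1 = e + 1 + 1 by omega, Tdesc, Tdesc,
        show i + 1 + e - e = i + 1 by omega, show i + 1 + e - (e + 1) = i by omega, mul_assoc]
    rw [hTdesc, mul_assoc, Tnat_braid (by omega), mul_assoc (Tnat q n i), ← mul_assoc,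
      ← (commute_Tnat_Tdesc (by omega)).eq, mul_assoc]
  | succ e ih =>
    rw [show e + 1 + (m - i) + 1 = e + (m - i) + 1 + 1 by omega, Tdesc, mul_assoc,
      (commute_Tnat (by omega)).eq, ← mul_assoc, ih (by omega), mul_assoc]

variable (q n) in
/-- The left module over the algebra generated by the first `m` of the `T_i` that is spanned by the
descending products starting with `T_m`. -/
noncomputable def heckeCosetSpan (m : ℕ) : Submodule F (H F q n) :=
  ⨆ d : Fin (m + 2),
    Subalgebra.toSubmodule (heckeSubalgebra q n m) * Submodule.span F {Tdesc q n m d}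

theorem mul_Tdesc_mem_heckeCosetSpan {m d : ℕ} (hd : d < m + 2) {b : H F q n}
    (hb : b ∈ heckeSubalgebra q n m) : b * Tdesc q n m d ∈ heckeCosetSpan q n m :=
  Submodule.mem_iSup_of_mem ⟨d, hd⟩
    (Submodule.mul_mem_mul hb (Submodule.mem_span_singleton_self _))

theorem mul_Tdesc_mul_Tnat_mem {m d j : ℕ} (hm : m < n - 1) (hd : d < m + 2) (hj : j < m + 1)
    {b : H F q n} (hb : b ∈ heckeSubalgebra q n m) :
    b * (Tdesc q n m d * Tnat q n j) ∈ heckeCosetSpan q n m := by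
  rcases lt_or_ge (j + d) m with h | h
  · rw [← (commute_Tnat_Tdesc h).eq, ← mul_assoc]
    exact mul_Tdesc_mem_heckeCosetSpan hd (mul_mem hb (Tnat_mem_heckeSubalgebra (by omega)))
  rcases h.eq_or_lt with h | h
  · obtain rfl : j = m - d := by omega
    exact mul_Tdesc_mem_heckeCosetSpan (d := d + 1) (by omega) hb
  rcases (Nat.succ_le_of_lt h).eq_or_lt with h | h
  · obtain ⟨e, rfl⟩ : ∃ e, d = e + 1 := ⟨d - 1, by omega⟩
    obtain rfl : j = m - e := by omega
    rw [Tdesc, mul_assoc, Tnat_mul_self (by omega), mul_add, mul_one, mul_smul_comm, mul_add,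
      mul_smul_comm]
    exact add_mem (Submodule.smul_mem _ _ (mul_Tdesc_mem_heckeCosetSpan hd hb))
      (mul_Tdesc_mem_heckeCosetSpan (by omega) hb)
  · obtain ⟨i, rfl⟩ : ∃ i, j = i + 1 := ⟨j - 1, by omega⟩
    rw [Tdesc_mul_Tnat hm (by omega) (by omega) (by omega), ← mul_assoc]
    exact mul_Tdesc_mem_heckeCosetSpan hd (mul_mem hb (Tnat_mem_heckeSubalgebra (by omega)))

theorem heckeSubalgebra_succ_le {m : ℕ} (hm : m < n - 1) :
    Subalgebra.toSubmodule (heckeSubalgebra q n (m + 1)) ≤ heckeCosetSpan q n m := by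
  intro x hx
  rw [← one_mul x]
  refine mul_mem_of_mem_adjoin_right ?_ hx 1 ?_
  · rintro _ ⟨j, hj, rfl⟩ a ha
    rw [← Tnat_eq j.isLt]
    refine Submodule.iSup_induction _
      (motive := fun a => a * Tnat q n j ∈ heckeCosetSpan q n m) ha ?_ (by simp)
      fun x y hx hy => add_mul x y _ ▸ add_mem hx hy
    rintro d x hx
    obtain ⟨b, hb, rfl⟩ := Submodule.mem_mul_span_singleton.1 hx
    rw [mul_assoc]
    exact mul_Tdesc_mul_Tnat_mem hm d.isLt hj hb
  · exact mul_one (1 : H F q n) ▸ mul_Tdesc_mem_heckeCosetSpan (d := 0) (by omega) (one_mem _)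

theorem exists_sum_mul_Tdesc {m : ℕ} (hm : m < n - 1) {z : H F q n}
    (hz : z ∈ cliffordHeckeSpan q n (m + 1)) :
    ∃ b : Fin (m + 2) → H F q n, (∀ d, b d ∈ cliffordHeckeSpan q n m) ∧
      z = ∑ d, b d * Tdesc q n m d := by
  have hle : cliffordHeckeSpan q n (m + 1) ≤
      ⨆ d : Fin (m + 2), cliffordHeckeSpan q n m * Submodule.span F {Tdesc q n m d} := by
    refine (mul_le_mul_right (heckeSubalgebra_succ_le hm) _).trans_eq ?_
    simp only [heckeCosetSpan, cliffordHeckeSpan, Submodule.mul_iSup, mul_assoc]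
  obtain ⟨f, hf, rfl⟩ := (Submodule.mem_iSup_iff_exists_finsupp _ _).1 (hle hz)
  choose b hb hbf using fun d => Submodule.mem_mul_span_singleton.1 (hf d)
  exact ⟨b, hb, by rw [Finsupp.sum_fintype _ _ fun _ => rfl]; simp only [hbf]⟩

theorem T_mul_C_mem (i : Fin (n - 1)) (j : Fin n) :
    T F q i * C F q j ∈ leftSpanPair (cliffordSubalgebra q n n) (T F q i) := by
  have hC (j : Fin n) : C F q j ∈ cliffordSubalgebra q n n := C_mem_cliffordSubalgebra j.isLt
  by_cases hlo : j = lo i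
  · rw [hlo, T_mul_C_lo]
    exact mul_mem_leftSpanPair (hC _)
  by_cases hhi : j = hi i
  · rw [hhi, T_mul_C_hi]
    exact add_mem (sub_mem (mul_mem_leftSpanPair (hC _))
      (Submodule.smul_mem _ _ (self_mem_leftSpanPair (hC _))))
      (Submodule.smul_mem _ _ (self_mem_leftSpanPair (hC _)))
  · exact (commute_T_C (q := q) hlo hhi).eq ▸ mul_mem_leftSpanPair (hC j)

theorem T_mul_X_mem (i : Fin (n - 1)) (j : Fin n) :
    T F q i * X F q j ∈ leftSpanPair (cliffordSubalgebra q n n) (T F q i) := by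
  have hX (j : Fin n) : X F q j ∈ cliffordSubalgebra q n n := X_mem_cliffordSubalgebra j n
  have hCCX (j : Fin n) : C F q (lo i) * C F q (hi i) * X F q j ∈ cliffordSubalgebra q n n :=
    mul_mem (mul_mem (C_mem_cliffordSubalgebra (lo i).isLt) (C_mem_cliffordSubalgebra (hi i).isLt))
      (hX j)
  by_cases hlo : j = lo i
  · rw [hlo, T_mul_X_lo]
    exact sub_mem (sub_mem (mul_mem_leftSpanPair (hX _))
      (Submodule.smul_mem _ _ (self_mem_leftSpanPair (hX _))))
      (Submodule.smul_mem _ _ (self_mem_leftSpanPair (hCCX _)))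
  by_cases hhi : j = hi i
  · rw [hhi, T_mul_X_hi]
    exact sub_mem (add_mem (mul_mem_leftSpanPair (hX _))
      (Submodule.smul_mem _ _ (self_mem_leftSpanPair (hX _))))
      (Submodule.smul_mem _ _ (self_mem_leftSpanPair (hCCX _)))
  · exact (commute_T_X (q := q) hlo hhi).eq ▸ mul_mem_leftSpanPair (hX j)

theorem T_mul_mem_leftSpanPair (i : Fin (n - 1)) {x : H F q n}
    (hx : x ∈ cliffordSubalgebra q n n) :
    T F q i * x ∈ leftSpanPair (cliffordSubalgebra q n n) (T F q i) := by
  refine mul_mem_leftSpanPair_of_adjoin ?_ hx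
  have hC (j : Fin n) : C F q j ∈ cliffordSubalgebra q n n := C_mem_cliffordSubalgebra j.isLt
  have hX (j : Fin n) : X F q j ∈ cliffordSubalgebra q n n := X_mem_cliffordSubalgebra j n
  rintro _ ((⟨j, rfl⟩ | ⟨j, rfl⟩) | ⟨j, _, rfl⟩)
  · exact T_mul_X_mem i j
  · rw [Xinv_eq_C_mul_X_mul_C]
    exact mul_mul_mem_leftSpanPair (T_mul_C_mem i j) (mul_mem (hX j) (hC j))
      (mul_mul_mem_leftSpanPair (T_mul_X_mem i j) (hC j) (T_mul_C_mem i j))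
  · exact T_mul_C_mem i j

theorem mul_mem_cliffordHeckeSpan {m : ℕ} {a x : H F q n} (ha : a ∈ cliffordSubalgebra q n n)
    (hx : x ∈ cliffordHeckeSpan q n m) : a * x ∈ cliffordHeckeSpan q n m := by
  refine Submodule.mul_induction_on hx (fun c hc b hb => ?_)
    fun x y hx hy => mul_add a x y ▸ add_mem hx hy
  exact mul_assoc a c b ▸ Submodule.mul_mem_mul (Subalgebra.mul_mem _ ha hc) hb

theorem T_mul_mem_cliffordHeckeSpan (i : Fin (n - 1)) {x : H F q n}
    (hx : x ∈ cliffordHeckeSpan q n (n - 1)) : T F q i * x ∈ cliffordHeckeSpan q n (n - 1) := by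
  refine Submodule.mul_induction_on hx (fun c hc b hb => ?_)
    fun x y hx hy => mul_add _ x y ▸ add_mem hx hy
  obtain ⟨a, ha, a', ha', h⟩ := mem_leftSpanPair.1 (T_mul_mem_leftSpanPair i hc)
  rw [← mul_assoc, ← h, add_mul, mul_assoc]
  exact add_mem (Submodule.mul_mem_mul ha hb)
    (Submodule.mul_mem_mul ha' (Subalgebra.mul_mem _ (T_mem_heckeSubalgebra i.isLt) hb))

theorem mem_cliffordHeckeSpan (z : H F q n) : z ∈ cliffordHeckeSpan q n (n - 1) := by
  have h1 : (1 : H F q n) ∈ cliffordHeckeSpan q n (n - 1) :=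
    mul_one (1 : H F q n) ▸ Submodule.mul_mem_mul (one_mem (cliffordSubalgebra q n n))
      (one_mem (heckeSubalgebra q n (n - 1)))
  have hz : z ∈ Algebra.adjoin F (Set.range (gen q (n := n))) :=
    adjoin_range_gen q n ▸ Algebra.mem_top
  rw [← mul_one z]
  refine mul_mem_of_mem_adjoin_left ?_ hz 1 h1
  rintro _ ⟨g, rfl⟩ a ha
  cases g with
  | X i => exact mul_mem_cliffordHeckeSpan (X_mem_cliffordSubalgebra i n) ha
  | Xinv i => exact mul_mem_cliffordHeckeSpan (Xinv_mem_cliffordSubalgebra i n) ha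
  | C i => exact mul_mem_cliffordHeckeSpan (C_mem_cliffordSubalgebra i.isLt) ha
  | T i => exact T_mul_mem_cliffordHeckeSpan i ha

end HeckeSpanning

section GenericPoints

variable {K : Type*} [Field K]

/-- The expression `(a - b)² - ξ² (a b - 4)`. At `a = u_i`, `b = u_j` it is, up to the factor
`(u_i - u_j)²`, the square of the intertwining element attached to the indices `i` and `j`. -/
def normNumerator {R : Type*} [CommRing R] (ξ a b : R) : R :=
  (a - b) ^ 2 - ξ ^ 2 * (a * b - 4)

theorem normNumerator_comm {R : Type*} [CommRing R] (ξ a b : R) :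
    normNumerator ξ a b = normNumerator ξ b a := by
  rw [normNumerator, normNumerator, sub_sq_comm, mul_comm a]

theorem map_normNumerator {R R' : Type*} [CommRing R] [CommRing R'] (f : R →+* R') (ξ a b : R) :
    f (normNumerator ξ a b) = normNumerator (f ξ) (f a) (f b) := by
  simp only [normNumerator, map_sub, map_mul, map_pow, map_ofNat]

/-- Values `u_i` are generic if they are distinct, differ from `±2`, and the intertwining elements
are invertible at them. -/
def IsGeneric (ξ : K) {n : ℕ} (u : Fin n → K) : Prop :=
  (∀ i, u i ^ 2 ≠ 4) ∧ ∀ i j, i ≠ j → u i ≠ u j ∧ normNumerator ξ (u i) (u j) ≠ 0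

/-- A point at which the generators `X_i` take the values `y i`, subject to genericity of the
`y i + (y i)⁻¹`. The signs `ε` record which coordinates have been inverted, and the labels `w` how
they have been permuted; so inversions and permutations act freely on these points. -/
@[ext] structure GenericPoint (ξ : K) (n : ℕ) where
  /-- The values of the `X_i`. -/
  y : Fin n → K
  /-- The sign attached to each coordinate. -/
  ε : Fin n → ℤˣ
  /-- The label of each coordinate. -/
  w : Equiv.Perm (Fin n)
  y_ne_zero : ∀ i, y i ≠ 0
  generic : IsGeneric ξ fun i => y i + (y i)⁻¹

namespace GenericPoint

variable {ξ : K} {n : ℕ} (p : GenericPoint ξ n)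

/-- The value `u_i = y_i + y_i⁻¹` of `X_i + X_i⁻¹`. -/
def u (i : Fin n) : K := p.y i + (p.y i)⁻¹

theorem u_ne {i j : Fin n} (h : i ≠ j) : p.u i ≠ p.u j := (p.generic.2 i j h).1

theorem y_ne {i j : Fin n} (h : i ≠ j) : p.y i ≠ p.y j := fun hy =>
  p.u_ne h (by rw [u, u, hy])

theorem y_mul_ne_one {i j : Fin n} (h : i ≠ j) : p.y i * p.y j ≠ 1 := fun hy =>
  p.u_ne h (by rw [u, u, eq_inv_of_mul_eq_one_left hy, inv_inv, add_comm])

theorem y_ne_inv (i : Fin n) : p.y i ≠ (p.y i)⁻¹ := fun h => by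
  refine p.generic.1 i ?_
  have hy := mul_inv_cancel₀ (p.y_ne_zero i)
  rw [← h] at hy
  dsimp only
  rw [← h]
  linear_combination 4 * hy

/-- Inversion of the `k`-th coordinate. -/
def flip (k : Fin n) (p : GenericPoint ξ n) : GenericPoint ξ n where
  y := Function.update p.y k (p.y k)⁻¹
  ε := p.ε * Pi.mulSingle k (-1)
  w := p.w
  y_ne_zero i := by
    rcases eq_or_ne i k with rfl | h
    · simpa using p.y_ne_zero i
    · simpa [h] using p.y_ne_zero i
  generic := by
    convert p.generic using 2 with i
    rcases eq_or_ne i k with rfl | h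
    · simp [add_comm]
    · simp [h]

/-- Renumbering of the coordinates. -/
def permute (σ : Equiv.Perm (Fin n)) (p : GenericPoint ξ n) : GenericPoint ξ n where
  y i := p.y (σ i)
  ε i := p.ε (σ i)
  w := p.w * σ
  y_ne_zero i := p.y_ne_zero (σ i)
  generic := ⟨fun i => p.generic.1 (σ i), fun i j h => p.generic.2 (σ i) (σ j) (σ.injective.ne h)⟩

theorem flip_y_self (k : Fin n) : (p.flip k).y k = (p.y k)⁻¹ := Function.update_self ..

theorem flip_y_of_ne {i k : Fin n} (h : i ≠ k) : (p.flip k).y i = p.y i :=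
  Function.update_of_ne h ..

theorem flip_u (k : Fin n) : (p.flip k).u = p.u := by
  funext i
  rcases eq_or_ne i k with rfl | h
  · rw [u, flip_y_self, inv_inv, u, add_comm]
  · rw [u, flip_y_of_ne p h, u]

theorem flip_flip (k : Fin n) : (p.flip k).flip k = p := by
  ext i
  · simp [flip]
  · simp [flip, mul_assoc, ← Pi.mulSingle_mul]
  · rfl

theorem flip_comm {i j : Fin n} (h : i ≠ j) : (p.flip i).flip j = (p.flip j).flip i := by
  ext k
  · simp only [flip, Function.update_of_ne h, Function.update_of_ne h.symm,
      Function.update_comm h]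
  · simp only [flip, mul_right_comm]
  · rfl

theorem permute_flip (σ : Equiv.Perm (Fin n)) (k : Fin n) :
    (p.permute σ).flip k = (p.flip (σ k)).permute σ := by
  ext i
  · simp only [flip, permute, Function.update_apply, EmbeddingLike.apply_eq_iff_eq]
  · simp only [flip, permute, Pi.mul_apply, Pi.mulSingle_apply, EmbeddingLike.apply_eq_iff_eq]
  · rfl

/-- The Jordan–Wigner sign: the product of the signs of all coordinates labelled below the `i`-th.
Twisting inversions by it makes them anticommute. -/
def sign (i : Fin n) : ℤˣ := ∏ j with p.w j < p.w i, p.ε j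

theorem flip_sign (i k : Fin n) :
    (p.flip k).sign i = p.sign i * if p.w k < p.w i then -1 else 1 := by
  change ∏ j with p.w j < p.w i, (p.ε j * Pi.mulSingle (M := fun _ => ℤˣ) k (-1) j) = _
  simp only [Finset.prod_mul_distrib, Finset.prod_pi_mulSingle', Finset.mem_filter, Finset.mem_univ,
    true_and, sign]

theorem permute_sign (σ : Equiv.Perm (Fin n)) (i : Fin n) :
    (p.permute σ).sign i = p.sign (σ i) := by
  rw [sign, sign, Finset.prod_filter, Finset.prod_filter]
  exact Equiv.prod_comp σ fun j => if p.w j < p.w (σ i) then p.ε j else 1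

theorem sign_mul_flip_sign_self (i : Fin n) : p.sign i * (p.flip i).sign i = 1 := by
  rw [flip_sign, if_neg (lt_irrefl _), mul_one, Int.units_mul_self]

theorem sign_mul_flip_sign {i j : Fin n} (h : i ≠ j) :
    p.sign i * (p.flip i).sign j = -(p.sign j * (p.flip j).sign i) := by
  rw [flip_sign, flip_sign]
  rcases lt_or_gt_of_ne (p.w.injective.ne h) with hlt | hlt <;>
    simp [hlt, hlt.not_gt, mul_comm]

end GenericPoint
end GenericPoints

/-- A system of operators satisfying the relations of the crossed product of the functions on
generic points with the Clifford algebra and the symmetric group, on which the functions act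
faithfully. -/
structure CrossedSystem {K : Type*} [Field K] (ξ : K) (n : ℕ) (E : Type*) [Ring E]
    [Algebra K E] where
  /-- Multiplication by a function. -/
  m : (GenericPoint ξ n → K) →ₐ[K] E
  /-- The Clifford operators. -/
  c : Fin n → E
  /-- The permutation operators. -/
  w : Equiv.Perm (Fin n) →* E
  m_injective : Function.Injective m
  c_mul_m : ∀ i f, c i * m f = m (fun p => f (p.flip i)) * c i
  c_mul_self : ∀ i, c i * c i = 1
  c_mul_c : ∀ i j, i ≠ j → c i * c j = -(c j * c i)
  w_mul_m : ∀ σ f, w σ * m f = m (fun p => f (p.permute σ)) * w σ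
  w_mul_c : ∀ σ i, w σ * c i = c (σ i) * w σ

/-- The operators on functions on generic points: `C_i` inverts the `i`-th coordinate, with the
Jordan–Wigner sign. -/
def CrossedSystem.ofFunctions {K : Type*} [Field K] (ξ : K) (n : ℕ) :
    CrossedSystem ξ n (Module.End K (GenericPoint ξ n → K)) where
  m := Algebra.lmul K (GenericPoint ξ n → K)
  c i :=
    { toFun v p := p.sign i • v (p.flip i)
      map_add' _ _ := funext fun _ => smul_add ..
      map_smul' a v := funext fun p => smul_comm (p.sign i) a (v (p.flip i)) }
  w :=
    { toFun σ := LinearMap.funLeft K K (GenericPoint.permute σ)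
      map_one' := rfl
      map_mul' _ _ := rfl }
  m_injective := Algebra.lmul_injective
  c_mul_m i f := LinearMap.ext fun v => funext fun p =>
    (mul_smul_comm (p.sign i) (f (p.flip i)) (v (p.flip i))).symm
  c_mul_self i := LinearMap.ext fun v => funext fun p => by
    simp [smul_smul, p.sign_mul_flip_sign_self, p.flip_flip]
  c_mul_c i j h := LinearMap.ext fun v => funext fun p => by
    simp [smul_smul, p.sign_mul_flip_sign h, p.flip_comm h, Units.neg_smul]
  w_mul_m _ _ := rfl
  w_mul_c σ i := LinearMap.ext fun v => funext fun p =>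
    congrArg₂ (fun s x => s • v x) (p.permute_sign σ i) (p.permute_flip σ i)

section Coefficients

variable {K : Type*} [Field K]

/-- The coefficient `ξ y / (y - x)` of `1` in the rational part of the action of a Hecke generator,
where `x` and `y` are the values of the two `X`'s involved. -/
def scalarCoeff (ξ x y : K) : K := ξ * (y / (y - x))

/-- The coefficient `ξ / (x y - 1)` of the product of the two Clifford generators in the rational
part of the action of a Hecke generator. -/
def cliffordCoeff (ξ x y : K) : K := ξ * (x * y - 1)⁻¹

/-- The ratio `((a - b)² - ξ² (a b - 4)) / (a - b)²`, the square of an intertwining element. -/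
def normRatio (ξ a b : K) : K := normNumerator ξ a b / (a - b) ^ 2

variable {ξ x y z : K}

theorem cliffordCoeff_comm : cliffordCoeff ξ x y = cliffordCoeff ξ y x := by
  rw [cliffordCoeff, cliffordCoeff, mul_comm x]

theorem scalarCoeff_swap (h : x ≠ y) : scalarCoeff ξ y x = ξ - scalarCoeff ξ x y := by
  have h₁ := sub_ne_zero.2 h
  have h₂ := sub_ne_zero.2 h.symm
  rw [scalarCoeff, scalarCoeff]
  field_simp
  ring

theorem scalarCoeff_inv_right (hy : y ≠ 0) : scalarCoeff ξ x y⁻¹ = -cliffordCoeff ξ x y := by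
  rw [scalarCoeff, cliffordCoeff, ← mul_neg, ← inv_neg, neg_sub, div_eq_mul_inv, ← mul_inv, mul_sub,
    mul_inv_cancel₀ hy, mul_comm y]

theorem cliffordCoeff_inv_right (hy : y ≠ 0) : cliffordCoeff ξ x y⁻¹ = -scalarCoeff ξ x y := by
  rw [← inv_inv y, scalarCoeff_inv_right (inv_ne_zero hy), neg_neg, inv_inv]

theorem scalarCoeff_mul_sub_cliffordCoeff_mul (hx : x ≠ 0) (hy : y ≠ 0) (h : x ≠ y)
    (h' : x * y ≠ 1) :
    scalarCoeff ξ x y * (ξ - scalarCoeff ξ x y) - cliffordCoeff ξ x y * (ξ + cliffordCoeff ξ x y) =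
      normRatio ξ (x + x⁻¹) (y + y⁻¹) - 1 := by
  have h₁ := sub_ne_zero.2 h.symm
  have h₂ := sub_ne_zero.2 h'
  have h₃ : y * x - 1 ≠ 0 := mul_comm x y ▸ h₂
  have hu : x + x⁻¹ - (y + y⁻¹) = -((y - x) * (x * y - 1) / (x * y)) := by
    field_simp
    ring
  rw [scalarCoeff, cliffordCoeff, normRatio, normNumerator, hu]
  field_simp
  ring

theorem scalarCoeff_yang_baxter (hxy : x ≠ y) (hxz : x ≠ z) (hyz : y ≠ z) :
    scalarCoeff ξ x z * scalarCoeff ξ x y =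
      scalarCoeff ξ x y * scalarCoeff ξ y z + scalarCoeff ξ z y * scalarCoeff ξ x z := by
  rw [scalarCoeff_swap hyz]
  have h₁ := sub_ne_zero.2 hxy.symm
  have h₂ := sub_ne_zero.2 hxz.symm
  have h₃ := sub_ne_zero.2 hyz.symm
  simp only [scalarCoeff]
  field_simp
  ring

end Coefficients

section CoefficientFunctions

variable {K : Type*} [Field K] {ξ : K} {n : ℕ}

/-- The function `scalarCoeff` of the `i`-th and `j`-th coordinates. -/
def scalarFun (ξ : K) (i j : Fin n) (p : GenericPoint ξ n) : K := scalarCoeff ξ (p.y i) (p.y j)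

/-- The function `cliffordCoeff` of the `i`-th and `j`-th coordinates. -/
def cliffordFun (ξ : K) (i j : Fin n) (p : GenericPoint ξ n) : K :=
  cliffordCoeff ξ (p.y i) (p.y j)

/-- The function `normRatio` of the values `u_i` and `u_j`. -/
def normFun (ξ : K) (i j : Fin n) (p : GenericPoint ξ n) : K := normRatio ξ (p.u i) (p.u j)

variable (p : GenericPoint ξ n) {i j k : Fin n}

theorem scalarFun_swap (h : i ≠ j) : scalarFun ξ j i p = ξ - scalarFun ξ i j p :=
  scalarCoeff_swap (p.y_ne h)

theorem cliffordFun_comm : cliffordFun ξ j i p = cliffordFun ξ i j p := cliffordCoeff_comm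

theorem scalarFun_flip_right (h : i ≠ j) :
    scalarFun ξ i j (p.flip j) = -cliffordFun ξ i j p := by
  rw [scalarFun, p.flip_y_self, p.flip_y_of_ne h, scalarCoeff_inv_right (p.y_ne_zero j),
    cliffordFun]

theorem scalarFun_flip_left (h : i ≠ j) :
    scalarFun ξ i j (p.flip i) = ξ + cliffordFun ξ i j p := by
  rw [scalarFun_swap _ h.symm, scalarFun_flip_right p h.symm, cliffordFun_comm, sub_neg_eq_add]

theorem cliffordFun_flip_right (h : i ≠ j) :
    cliffordFun ξ i j (p.flip j) = -scalarFun ξ i j p := by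
  rw [cliffordFun, p.flip_y_self, p.flip_y_of_ne h, cliffordCoeff_inv_right (p.y_ne_zero j),
    scalarFun]

theorem cliffordFun_flip_left (h : i ≠ j) :
    cliffordFun ξ i j (p.flip i) = -scalarFun ξ j i p := by
  rw [← cliffordFun_comm, cliffordFun_flip_right p h.symm]

theorem scalarFun_flip_of_ne (hi : i ≠ k) (hj : j ≠ k) :
    scalarFun ξ i j (p.flip k) = scalarFun ξ i j p := by
  rw [scalarFun, p.flip_y_of_ne hi, p.flip_y_of_ne hj, scalarFun]

theorem cliffordFun_flip_of_ne (hi : i ≠ k) (hj : j ≠ k) :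
    cliffordFun ξ i j (p.flip k) = cliffordFun ξ i j p := by
  rw [cliffordFun, p.flip_y_of_ne hi, p.flip_y_of_ne hj, cliffordFun]

theorem scalarFun_yang_baxter (hij : i ≠ j) (hik : i ≠ k) (hjk : j ≠ k) :
    scalarFun ξ i k p * scalarFun ξ i j p =
      scalarFun ξ i j p * scalarFun ξ j k p + scalarFun ξ k j p * scalarFun ξ i k p :=
  scalarCoeff_yang_baxter (p.y_ne hij) (p.y_ne hik) (p.y_ne hjk)

theorem scalarFun_yang_baxter_flip_middle (hij : i ≠ j) (hik : i ≠ k) (hjk : j ≠ k) :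
    scalarFun ξ i k p * cliffordFun ξ i j p =
      cliffordFun ξ i j p * scalarFun ξ j k ((p.flip i).flip j) -
        cliffordFun ξ k j p * cliffordFun ξ i k ((p.flip k).flip j) := by
  have hp := scalarFun_yang_baxter (p.flip j) hij hik hjk
  simp only [scalarFun_flip_right, scalarFun_flip_left, cliffordFun_flip_right,
    scalarFun_flip_of_ne, cliffordFun_flip_of_ne, ne_eq, hij, hik, hjk, hij.symm, hik.symm,
    hjk.symm, not_false_eq_true] at hp ⊢
  linear_combination -hp

theorem scalarFun_yang_baxter_flip_left (hij : i ≠ j) (hik : i ≠ k) (hjk : j ≠ k) :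
    cliffordFun ξ i k p * scalarFun ξ i j ((p.flip i).flip k) =
      cliffordFun ξ i j p * cliffordFun ξ j k ((p.flip i).flip j) +
        scalarFun ξ k j p * cliffordFun ξ i k p := by
  have hp := scalarFun_yang_baxter (p.flip i) hij hik hjk
  simp only [scalarFun_flip_left, cliffordFun_flip_left, scalarFun_flip_of_ne, ne_eq, hij, hik,
    hjk, hij.symm, hik.symm, not_false_eq_true, scalarFun_swap _ hjk] at hp ⊢
  linear_combination hp

theorem scalarFun_yang_baxter_flip_right (hij : i ≠ j) (hik : i ≠ k) (hjk : j ≠ k) :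
    cliffordFun ξ i k p * cliffordFun ξ i j ((p.flip i).flip k) =
      scalarFun ξ i j p * cliffordFun ξ j k p -
        cliffordFun ξ k j p * scalarFun ξ i k ((p.flip k).flip j) := by
  have hp := scalarFun_yang_baxter (p.flip k) hij hik hjk
  simp only [scalarFun_flip_right, scalarFun_flip_left, cliffordFun_flip_left,
    scalarFun_flip_of_ne, cliffordFun_flip_of_ne, ne_eq, hij, hik, hjk, hjk.symm,
    not_false_eq_true, scalarFun_swap _ hij, cliffordFun_comm (i := j) (j := k)] at hp ⊢
  linear_combination -hp

theorem scalarFun_mul_sub_cliffordFun_mul (h : i ≠ j) :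
    scalarFun ξ i j p * (ξ - scalarFun ξ i j p) - cliffordFun ξ i j p * (ξ + cliffordFun ξ i j p) =
      normFun ξ i j p - 1 :=
  scalarCoeff_mul_sub_cliffordCoeff_mul (p.y_ne_zero i) (p.y_ne_zero j) (p.y_ne h)
    (p.y_mul_ne_one h)

end CoefficientFunctions

namespace CrossedSystem

variable {K : Type*} [Field K] {ξ : K} {n : ℕ} {E : Type*} [Ring E] [Algebra K E]
  (S : CrossedSystem ξ n E)

section Functions

theorem commute_m_m (f g : GenericPoint ξ n → K) : Commute (S.m f) (S.m g) :=
  (Commute.all f g).map S.m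

theorem m_eq_m {f g : GenericPoint ξ n → K} (h : ∀ p, f p = g p) : S.m f = S.m g :=
  congrArg S.m (funext h)

theorem commute_c_m {i : Fin n} {f : GenericPoint ξ n → K} (h : ∀ p, f (p.flip i) = f p) :
    Commute (S.c i) (S.m f) := by
  rw [Commute, SemiconjBy, S.c_mul_m, S.m_eq_m h]

theorem isUnit_m {f : GenericPoint ξ n → K} (h : ∀ p, f p ≠ 0) : IsUnit (S.m f) :=
  (Pi.isUnit_iff.2 fun p => (h p).isUnit).map S.m

theorem cc_mul_m (i j : Fin n) (f : GenericPoint ξ n → K) :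
    S.c i * S.c j * S.m f = S.m (fun p => f ((p.flip i).flip j)) * (S.c i * S.c j) := by
  rw [mul_assoc, S.c_mul_m, ← mul_assoc, S.c_mul_m, mul_assoc]

theorem cc_mul_c {i j : Fin n} (h : i ≠ j) : S.c i * S.c j * S.c i = -S.c j := by
  rw [S.c_mul_c i j h, neg_mul, mul_assoc, S.c_mul_self, mul_one]

theorem c_mul_cc {i j : Fin n} (h : i ≠ j) : S.c j * (S.c i * S.c j) = -S.c i := by
  rw [← mul_assoc, S.cc_mul_c h.symm]

theorem cc_mul_cc_self {i j : Fin n} (h : i ≠ j) : S.c i * S.c j * (S.c i * S.c j) = -1 := by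
  rw [← mul_assoc, S.cc_mul_c h, neg_mul, S.c_mul_self]

theorem m_add_mul_m_add (f g f' g' : GenericPoint ξ n → K) (i j k l : Fin n) :
    (S.m f + S.m g * (S.c i * S.c j)) * (S.m f' + S.m g' * (S.c k * S.c l)) =
      S.m (f * f') + S.m (f * g') * (S.c k * S.c l) +
        S.m (g * fun p => f' ((p.flip i).flip j)) * (S.c i * S.c j) +
        S.m (g * fun p => g' ((p.flip i).flip j)) * (S.c i * S.c j * (S.c k * S.c l)) := by
  simp only [map_mul, add_mul, mul_add]
  rw [mul_assoc (S.m g), cc_mul_m, ← mul_assoc (S.m g * _), mul_assoc (S.m g) _ (S.m g'), cc_mul_m]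
  simp only [mul_assoc]
  abel

end Functions

section RationalPart

/-- The rational part of the action of a Hecke generator. -/
def r (i j : Fin n) : E :=
  S.m (scalarFun ξ i j) + S.m (cliffordFun ξ i j) * (S.c i * S.c j)

theorem r_swap {i j : Fin n} (h : i ≠ j) : S.r j i = algebraMap K E ξ - S.r i j := by
  rw [r, S.c_mul_c j i h.symm, r, ← AlgHom.commutes S.m, mul_neg, sub_add_eq_sub_sub, ← map_sub,
    ← sub_eq_add_neg]
  exact congrArg₂ (S.m · - S.m · * _) (funext fun p => scalarFun_swap p h)
    (funext fun p => cliffordFun_comm p)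

theorem r_mul_self {i j : Fin n} (h : i ≠ j) :
    S.r i j * S.r i j = ξ • S.r i j - (S.m (normFun ξ i j) - 1) := by
  have h₁ : S.m (scalarFun ξ i j * scalarFun ξ i j -
      cliffordFun ξ i j * fun p => cliffordFun ξ i j ((p.flip i).flip j)) =
      S.m (ξ • scalarFun ξ i j - (normFun ξ i j - 1)) := S.m_eq_m fun p => by
    simp only [Pi.sub_apply, Pi.mul_apply, Pi.smul_apply, Pi.one_apply, smul_eq_mul,
      cliffordFun_flip_right _ h, scalarFun_flip_left _ h]
    linear_combination -scalarFun_mul_sub_cliffordFun_mul p h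
  have h₂ : S.m (scalarFun ξ i j * cliffordFun ξ i j +
      cliffordFun ξ i j * fun p => scalarFun ξ i j ((p.flip i).flip j)) =
      S.m (ξ • cliffordFun ξ i j) := S.m_eq_m fun p => by
    simp only [Pi.add_apply, Pi.mul_apply, Pi.smul_apply, smul_eq_mul, scalarFun_flip_right _ h,
      cliffordFun_flip_left _ h, scalarFun_swap _ h]
    ring
  rw [r, m_add_mul_m_add, S.cc_mul_cc_self h, smul_add, ← smul_mul_assoc, ← map_smul, ← map_smul]
  simp only [map_add, map_sub, map_one] at h₁ h₂
  linear_combination (norm := noncomm_ring) h₁ + h₂ * (S.c i * S.c j)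

theorem r_yang_baxter {i j k : Fin n} (hij : i ≠ j) (hik : i ≠ k) (hjk : j ≠ k) :
    S.r i k * S.r i j = S.r i j * S.r j k + S.r k j * S.r i k := by
  have c₁ : S.c i * S.c k * (S.c i * S.c j) = S.c j * S.c k := by
    rw [← mul_assoc, S.cc_mul_c hik, neg_mul, S.c_mul_c j k hjk]
  have c₂ : S.c i * S.c j * (S.c j * S.c k) = S.c i * S.c k := by
    rw [mul_assoc, ← mul_assoc (S.c j), S.c_mul_self, one_mul]
  have c₃ : S.c k * S.c j * (S.c i * S.c k) = -(S.c i * S.c j) := by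
    rw [S.c_mul_c i k hik, S.c_mul_c k j hjk.symm, neg_mul_neg, mul_assoc, ← mul_assoc (S.c k),
      S.c_mul_self, one_mul, S.c_mul_c j i hij.symm]
  have h₀ : S.m (scalarFun ξ i k * scalarFun ξ i j) =
      S.m (scalarFun ξ i j * scalarFun ξ j k + scalarFun ξ k j * scalarFun ξ i k) :=
    S.m_eq_m fun p => scalarFun_yang_baxter p hij hik hjk
  have h₁ : S.m (scalarFun ξ i k * cliffordFun ξ i j) =
      S.m ((cliffordFun ξ i j * fun p => scalarFun ξ j k ((p.flip i).flip j)) -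
        cliffordFun ξ k j * fun p => cliffordFun ξ i k ((p.flip k).flip j)) :=
    S.m_eq_m fun p => scalarFun_yang_baxter_flip_middle p hij hik hjk
  have h₂ : S.m (cliffordFun ξ i k * fun p => scalarFun ξ i j ((p.flip i).flip k)) =
      S.m ((cliffordFun ξ i j * fun p => cliffordFun ξ j k ((p.flip i).flip j)) +
        scalarFun ξ k j * cliffordFun ξ i k) :=
    S.m_eq_m fun p => scalarFun_yang_baxter_flip_left p hij hik hjk
  have h₃ : S.m (cliffordFun ξ i k * fun p => cliffordFun ξ i j ((p.flip i).flip k)) =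
      S.m (scalarFun ξ i j * cliffordFun ξ j k -
        cliffordFun ξ k j * fun p => scalarFun ξ i k ((p.flip k).flip j)) :=
    S.m_eq_m fun p => scalarFun_yang_baxter_flip_right p hij hik hjk
  simp only [r, m_add_mul_m_add, c₁, c₂, c₃]
  rw [S.c_mul_c k j hjk.symm]
  simp only [map_add, map_sub] at h₀ h₁ h₂ h₃
  linear_combination (norm := noncomm_ring) h₀ + h₁ * (S.c i * S.c j) + h₂ * (S.c i * S.c k) +
    h₃ * (S.c j * S.c k)

theorem commute_r_m {i j : Fin n} {f : GenericPoint ξ n → K}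
    (h : ∀ p, f ((p.flip i).flip j) = f p) : Commute (S.r i j) (S.m f) := by
  refine (S.commute_m_m _ _).add_left ((S.commute_m_m _ _).mul_left ?_)
  rw [Commute, SemiconjBy, cc_mul_m, S.m_eq_m h]

theorem commute_r_c {i j k : Fin n} (hi : i ≠ k) (hj : j ≠ k) : Commute (S.r i j) (S.c k) := by
  refine (S.commute_c_m fun p => scalarFun_flip_of_ne p hi hj).symm.add_left
    ((S.commute_c_m fun p => cliffordFun_flip_of_ne p hi hj).symm.mul_left ?_)
  rw [Commute, SemiconjBy, mul_assoc, S.c_mul_c j k hj, mul_neg, ← mul_assoc, S.c_mul_c i k hi,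
    neg_mul, neg_neg, mul_assoc]

theorem commute_r_r {i j k l : Fin n} (hik : i ≠ k) (hil : i ≠ l) (hjk : j ≠ k) (hjl : j ≠ l) :
    Commute (S.r i j) (S.r k l) := by
  refine (S.commute_r_m fun p => ?_).add_right ((S.commute_r_m fun p => ?_).mul_right
    ((S.commute_r_c hik hjk).mul_right (S.commute_r_c hil hjl)))
  · rw [scalarFun_flip_of_ne _ hjk.symm hjl.symm, scalarFun_flip_of_ne _ hik.symm hil.symm]
  · rw [cliffordFun_flip_of_ne _ hjk.symm hjl.symm, cliffordFun_flip_of_ne _ hik.symm hil.symm]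

theorem r_mul_c {i j : Fin n} (h : i ≠ j) : S.r i j * S.c i = S.c j * S.r i j := by
  have h₁ : S.c j * S.m (scalarFun ξ i j) = -(S.m (cliffordFun ξ i j) * S.c j) := by
    rw [S.c_mul_m, ← neg_mul, ← map_neg]
    exact congrArg (· * S.c j) (S.m_eq_m fun p => scalarFun_flip_right p h)
  have h₂ : S.c j * S.m (cliffordFun ξ i j) = -(S.m (scalarFun ξ i j) * S.c j) := by
    rw [S.c_mul_m, ← neg_mul, ← map_neg]
    exact congrArg (· * S.c j) (S.m_eq_m fun p => cliffordFun_flip_right p h)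
  rw [r, add_mul, mul_add, mul_assoc, S.cc_mul_c h, h₁, ← mul_assoc (S.c j), h₂, neg_mul, mul_assoc,
    S.c_mul_cc h, mul_neg, mul_neg, neg_neg, add_comm]

theorem r_mul_m_y {i j : Fin n} (h : i ≠ j) :
    S.r i j * S.m (fun p => p.y i) = S.m (fun p => p.y j) * S.r i j - ξ • S.m (fun p => p.y j)
      - ξ • (S.c i * S.c j * S.m fun p => p.y i) := by
  have h₁ : S.m (scalarFun ξ i j * fun p => p.y i) =
      S.m ((fun p => p.y j) * scalarFun ξ i j - ξ • fun p => p.y j) := S.m_eq_m fun p => by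
    have := sub_ne_zero.2 (p.y_ne h.symm)
    simp only [Pi.sub_apply, Pi.mul_apply, Pi.smul_apply, smul_eq_mul, scalarFun, scalarCoeff]
    field_simp
    ring
  have h₂ : S.m (cliffordFun ξ i j * fun p => ((p.flip i).flip j).y i) =
      S.m ((fun p => p.y j) * cliffordFun ξ i j - ξ • fun p => ((p.flip i).flip j).y i) :=
    S.m_eq_m fun p => by
      have := p.y_ne_zero i
      have := sub_ne_zero.2 (p.y_mul_ne_one h)
      simp only [Pi.sub_apply, Pi.mul_apply, Pi.smul_apply, smul_eq_mul, cliffordFun,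
        cliffordCoeff, GenericPoint.flip_y_self, GenericPoint.flip_y_of_ne _ h]
      field_simp
      ring
  rw [cc_mul_m, r, add_mul, mul_add, mul_assoc (S.m _) (_ * _) (S.m _), cc_mul_m,
    ← smul_mul_assoc, ← map_smul, ← map_smul]
  simp only [map_mul, map_sub] at h₁ h₂
  linear_combination (norm := noncomm_ring) h₁ + h₂ * (S.c i * S.c j)

theorem w_mul_r (σ : Equiv.Perm (Fin n)) (i j : Fin n) :
    S.w σ * S.r i j = S.r (σ i) (σ j) * S.w σ := by
  have h : S.w σ * (S.c i * S.c j) = S.c (σ i) * S.c (σ j) * S.w σ := by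
    rw [← mul_assoc, S.w_mul_c, mul_assoc, S.w_mul_c, ← mul_assoc]
  rw [r, r, mul_add, add_mul, ← mul_assoc, S.w_mul_m, S.w_mul_m, mul_assoc _ (S.w σ), h,
    ← mul_assoc]
  rfl

end RationalPart
end CrossedSystem

section IntertwinerFunctions

variable {K : Type*} [Field K] {ξ : K} {n : ℕ} (p : GenericPoint ξ n) {i j k : Fin n}

theorem normFun_ne_zero (h : i ≠ j) : normFun ξ i j p ≠ 0 :=
  div_ne_zero (p.generic.2 i j h).2 (pow_ne_zero 2 (sub_ne_zero.2 (p.u_ne h)))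

theorem normFun_flip : normFun ξ i j (p.flip k) = normFun ξ i j p := by
  rw [normFun, p.flip_u, normFun]

/-- A factor of the norm of an intertwining element, chosen by means of the labels so that the
factors for `(i, j)` and for `(j, i)` multiply to the norm, and no square roots are needed. -/
def phiFun (ξ : K) {n : ℕ} (i j : Fin n) (p : GenericPoint ξ n) : K :=
  if p.w i < p.w j then normFun ξ i j p else 1

theorem phiFun_flip : phiFun ξ i j (p.flip k) = phiFun ξ i j p := by
  rw [phiFun, normFun_flip, phiFun]
  rfl

theorem phiFun_ne_zero (h : i ≠ j) : phiFun ξ i j p ≠ 0 := by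
  rw [phiFun]
  split_ifs
  exacts [normFun_ne_zero p h, one_ne_zero]

theorem phiFun_mul_phiFun (h : i ≠ j) : phiFun ξ i j p * phiFun ξ j i p = normFun ξ i j p := by
  have hN : normFun ξ j i p = normFun ξ i j p := by
    rw [normFun, normFun, normRatio, normRatio, normNumerator_comm, sub_sq_comm]
  rcases lt_or_gt_of_ne (p.w.injective.ne h) with hlt | hlt <;>
    simp [phiFun, hlt, hlt.not_gt, hN]

end IntertwinerFunctions

namespace CrossedSystem

variable {K : Type*} [Field K] {ξ : K} {n : ℕ} {E : Type*} [Ring E] [Algebra K E]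
  (S : CrossedSystem ξ n E)

section Intertwiners

/-- The normalized intertwining elements. -/
def phi (i j : Fin n) : E := S.m (phiFun ξ i j) * S.w (Equiv.swap i j)

theorem phi_mul_m (i j : Fin n) (f : GenericPoint ξ n → K) :
    S.phi i j * S.m f = S.m (fun p => f (p.permute (Equiv.swap i j))) * S.phi i j := by
  rw [phi, mul_assoc, S.w_mul_m, ← mul_assoc, ← mul_assoc, (S.commute_m_m _ _).eq]

theorem phi_mul_c (i j k : Fin n) :
    S.phi i j * S.c k = S.c (Equiv.swap i j k) * S.phi i j := by
  rw [phi, mul_assoc, S.w_mul_c, ← mul_assoc, ← mul_assoc,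
    (S.commute_c_m fun p => phiFun_flip p).eq]

theorem phi_mul_r (i j k l : Fin n) :
    S.phi i j * S.r k l = S.r (Equiv.swap i j k) (Equiv.swap i j l) * S.phi i j := by
  rw [phi, mul_assoc, S.w_mul_r, ← mul_assoc, ← mul_assoc,
    (S.commute_r_m fun p => by rw [phiFun_flip, phiFun_flip]).eq]

theorem m_mul_w_mul_phi (f : GenericPoint ξ n → K) (σ : Equiv.Perm (Fin n)) (i j : Fin n) :
    S.m f * S.w σ * S.phi i j =
      S.m (f * phiFun ξ (σ i) (σ j)) * S.w (σ * Equiv.swap i j) := by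
  rw [phi, mul_assoc, ← mul_assoc (S.w σ), S.w_mul_m, mul_assoc, ← map_mul, ← mul_assoc, ← map_mul]
  rfl

theorem phi_mul_phi (i j k l : Fin n) :
    S.phi i j * S.phi k l =
      S.m (phiFun ξ i j * phiFun ξ (Equiv.swap i j k) (Equiv.swap i j l)) *
        S.w (Equiv.swap i j * Equiv.swap k l) :=
  S.m_mul_w_mul_phi ..

theorem phi_mul_self {i j : Fin n} (h : i ≠ j) : S.phi i j * S.phi i j = S.m (normFun ξ i j) := by
  rw [phi_mul_phi, Equiv.swap_mul_self, map_one, mul_one, Equiv.swap_apply_left,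
    Equiv.swap_apply_right]
  exact S.m_eq_m fun p => phiFun_mul_phiFun p h

theorem commute_phi_phi {i j k l : Fin n} (hik : i ≠ k) (hil : i ≠ l) (hjk : j ≠ k)
    (hjl : j ≠ l) : Commute (S.phi i j) (S.phi k l) := by
  have hw : Equiv.swap i j * Equiv.swap k l = Equiv.swap k l * Equiv.swap i j := by
    rw [Equiv.mul_swap_eq_swap_mul, Equiv.swap_apply_of_ne_of_ne hik.symm hjk.symm,
      Equiv.swap_apply_of_ne_of_ne hil.symm hjl.symm]
  rw [Commute, SemiconjBy, phi_mul_phi, phi_mul_phi, Equiv.swap_apply_of_ne_of_ne hik.symm hjk.symm,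
    Equiv.swap_apply_of_ne_of_ne hil.symm hjl.symm, Equiv.swap_apply_of_ne_of_ne hik hil,
    Equiv.swap_apply_of_ne_of_ne hjk hjl, mul_comm (phiFun ξ i j), hw]

theorem phi_braid {i j k : Fin n} (hij : i ≠ j) (hik : i ≠ k) (hjk : j ≠ k) :
    S.phi i j * S.phi j k * S.phi i j = S.phi j k * S.phi i j * S.phi j k := by
  have hw : Equiv.swap i j * Equiv.swap j k * Equiv.swap i j =
      Equiv.swap j k * Equiv.swap i j * Equiv.swap j k := by
    rw [Equiv.swap_mul_swap_mul_swap hij hik, Equiv.swap_comm i j, Equiv.swap_comm j k,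
      Equiv.swap_mul_swap_mul_swap hjk.symm hik.symm, Equiv.swap_comm]
  rw [phi_mul_phi, phi_mul_phi, m_mul_w_mul_phi, m_mul_w_mul_phi, hw]
  simp only [Equiv.Perm.mul_apply, Equiv.swap_apply_left, Equiv.swap_apply_right,
    Equiv.swap_apply_of_ne_of_ne hij hik, Equiv.swap_apply_of_ne_of_ne hik.symm hjk.symm]
  exact congrArg (S.m · * _) (by ring)

theorem isUnit_phi {i j : Fin n} (h : i ≠ j) : IsUnit (S.phi i j) :=
  (S.isUnit_m fun p => phiFun_ne_zero p h).mul ((Group.isUnit _).map S.w)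

end Intertwiners

section HeckeOperators

/-- The operators by which the Hecke generators act. -/
def heckeOp (i j : Fin n) : E := S.phi i j + S.r i j

theorem heckeOp_mul_self {i j : Fin n} (h : i ≠ j) :
    S.heckeOp i j * S.heckeOp i j = ξ • S.heckeOp i j + 1 := by
  have hr := S.phi_mul_r i j i j
  rw [Equiv.swap_apply_left, Equiv.swap_apply_right, S.r_swap h, sub_mul, ← Algebra.smul_def] at hr
  rw [heckeOp, add_mul, mul_add, mul_add, hr, S.phi_mul_self h, S.r_mul_self h, smul_add]
  abel

theorem r_mul_r_swap {i j : Fin n} (h : i ≠ j) : S.r i j * S.r j i = S.m (normFun ξ i j) - 1 := by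
  rw [S.r_swap h, mul_sub, ← Algebra.commutes, ← Algebra.smul_def, S.r_mul_self h, sub_sub_cancel]

theorem r_swap_mul_r {i j : Fin n} (h : i ≠ j) : S.r j i * S.r i j = S.m (normFun ξ i j) - 1 := by
  rw [S.r_swap h, sub_mul, ← Algebra.smul_def, S.r_mul_self h, sub_sub_cancel]

theorem r_yang_baxter_swap {i j k : Fin n} (hij : i ≠ j) (hik : i ≠ k) (hjk : j ≠ k) :
    S.r j k * S.r i k = S.r i j * S.r j k + S.r i k * S.r j i := by
  have h := S.r_yang_baxter hij hik hjk
  rw [S.r_swap hjk] at h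
  rw [S.r_swap hij]
  linear_combination (norm := noncomm_ring) h + Algebra.commutes ξ (S.r i k)

theorem heckeOp_mul_mul_left {i j k : Fin n} (hij : i ≠ j) (hik : i ≠ k) (hjk : j ≠ k) :
    S.heckeOp i j * S.heckeOp j k * S.heckeOp i j =
      S.phi i j * S.phi j k * S.phi i j + S.r j k * S.phi i j * S.phi j k +
        S.r i k * S.m (normFun ξ i j) + S.r i k * S.r j i * S.phi i j +
        S.r i j * S.phi j k * S.phi i j + S.r i j * S.r i k * S.phi j k +
        S.r i j * S.r j k * S.phi i j + S.r i j * S.r j k * S.r i j := by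
  have sij : Equiv.swap i j k = k := Equiv.swap_apply_of_ne_of_ne hik.symm hjk.symm
  have sjk : Equiv.swap j k i = i := Equiv.swap_apply_of_ne_of_ne hij hik
  have h₁ := S.phi_mul_r i j i j
  have h₂ := S.phi_mul_r i j j k
  have h₃ := S.phi_mul_r i j i k
  have h₄ := S.phi_mul_r j k i j
  rw [Equiv.swap_apply_left, Equiv.swap_apply_right] at h₁
  rw [sij, Equiv.swap_apply_right] at h₂
  rw [sij, Equiv.swap_apply_left] at h₃
  rw [sjk, Equiv.swap_apply_left] at h₄
  rw [heckeOp, heckeOp]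
  linear_combination (norm := noncomm_ring) S.phi i j * h₄ + h₃ * S.phi j k + h₂ * S.phi i j +
    S.r i k * S.phi_mul_self hij + h₂ * S.r i j + S.r i k * h₁ + S.r i j * h₄

theorem heckeOp_mul_mul_right {i j k : Fin n} (hij : i ≠ j) (hik : i ≠ k) (hjk : j ≠ k) :
    S.heckeOp j k * S.heckeOp i j * S.heckeOp j k =
      S.phi j k * S.phi i j * S.phi j k + S.r j k * S.phi i j * S.phi j k +
        S.r i k * S.m (normFun ξ j k) + S.r i k * S.r k j * S.phi j k +
        S.r i j * S.phi j k * S.phi i j + S.r j k * S.r i k * S.phi i j +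
        S.r j k * S.r i j * S.phi j k + S.r j k * S.r i j * S.r j k := by
  have sij : Equiv.swap i j k = k := Equiv.swap_apply_of_ne_of_ne hik.symm hjk.symm
  have sjk : Equiv.swap j k i = i := Equiv.swap_apply_of_ne_of_ne hij hik
  have h₁ := S.phi_mul_r j k j k
  have h₂ := S.phi_mul_r j k i j
  have h₃ := S.phi_mul_r j k i k
  have h₄ := S.phi_mul_r i j j k
  rw [Equiv.swap_apply_left, Equiv.swap_apply_right] at h₁
  rw [sjk, Equiv.swap_apply_left] at h₂
  rw [sjk, Equiv.swap_apply_right] at h₃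
  rw [sij, Equiv.swap_apply_right] at h₄
  rw [heckeOp, heckeOp]
  linear_combination (norm := noncomm_ring) S.phi j k * h₄ + h₃ * S.phi i j + h₂ * S.phi j k +
    S.r i k * S.phi_mul_self hjk + h₂ * S.r j k + S.r i k * h₁ + S.r j k * h₄

theorem heckeOp_braid {i j k : Fin n} (hij : i ≠ j) (hik : i ≠ k) (hjk : j ≠ k) :
    S.heckeOp i j * S.heckeOp j k * S.heckeOp i j =
      S.heckeOp j k * S.heckeOp i j * S.heckeOp j k := by
  have hm : S.m (normFun ξ j k) * S.r i k = S.r i k * S.m (normFun ξ j k) :=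
    (S.commute_r_m fun p => by rw [normFun_flip, normFun_flip]).symm.eq
  have y₁ := S.r_yang_baxter_swap hij hik hjk
  have y₂ := S.r_yang_baxter hij hik hjk
  have y₃ := S.r_yang_baxter hik hij hjk.symm
  rw [S.heckeOp_mul_mul_left hij hik hjk, S.heckeOp_mul_mul_right hij hik hjk]
  linear_combination (norm := noncomm_ring) S.phi_braid hij hik hjk - y₁ * S.phi i j +
    y₃ * S.phi j k - y₁ * S.r i j + S.r j k * y₂ - S.r i k * S.r_swap_mul_r hij +
    S.r_mul_r_swap hjk * S.r i k + hm

theorem commute_heckeOp_heckeOp {i j k l : Fin n} (hik : i ≠ k) (hil : i ≠ l) (hjk : j ≠ k)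
    (hjl : j ≠ l) : Commute (S.heckeOp i j) (S.heckeOp k l) := by
  have h : ∀ {i j k l : Fin n}, i ≠ k → i ≠ l → j ≠ k → j ≠ l →
      Commute (S.phi i j) (S.r k l) := fun {i j k l} hik hil hjk hjl => by
    rw [Commute, SemiconjBy, phi_mul_r, Equiv.swap_apply_of_ne_of_ne hik.symm hjk.symm,
      Equiv.swap_apply_of_ne_of_ne hil.symm hjl.symm]
  exact ((S.commute_phi_phi hik hil hjk hjl).add_right (h hik hil hjk hjl)).add_left
    ((h hik.symm hjk.symm hil.symm hjl.symm).symm.add_right (S.commute_r_r hik hil hjk hjl))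

theorem heckeOp_mul_c {i j : Fin n} (h : i ≠ j) :
    S.heckeOp i j * S.c i = S.c j * S.heckeOp i j := by
  rw [heckeOp, add_mul, mul_add, phi_mul_c, Equiv.swap_apply_left, S.r_mul_c h]

theorem commute_heckeOp_c {i j k : Fin n} (hi : k ≠ i) (hj : k ≠ j) :
    Commute (S.heckeOp i j) (S.c k) := by
  refine Commute.add_left ?_ (S.commute_r_c hi.symm hj.symm)
  rw [Commute, SemiconjBy, phi_mul_c, Equiv.swap_apply_of_ne_of_ne hi hj]

theorem commute_heckeOp_m {i j : Fin n} {f : GenericPoint ξ n → K}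
    (hr : ∀ p, f ((p.flip i).flip j) = f p) (hs : ∀ p, f (p.permute (Equiv.swap i j)) = f p) :
    Commute (S.heckeOp i j) (S.m f) := by
  refine Commute.add_left ?_ (S.commute_r_m hr)
  rw [Commute, SemiconjBy, phi_mul_m, S.m_eq_m hs]

theorem heckeOp_mul_m_y {i j : Fin n} (h : i ≠ j) :
    S.heckeOp i j * S.m (fun p => p.y i) =
      S.m (fun p => p.y j) * S.heckeOp i j - ξ • S.m (fun p => p.y j) -
        ξ • (S.c i * S.c j * S.m fun p => p.y i) := by
  have hy : S.phi i j * S.m (fun p => p.y i) = S.m (fun p => p.y j) * S.phi i j := by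
    rw [phi_mul_m]
    exact congrArg (· * _) (S.m_eq_m fun p => congrArg p.y (Equiv.swap_apply_left i j))
  rw [heckeOp, add_mul, S.r_mul_m_y h, hy, mul_add, add_sub, add_sub]

theorem heckeOp_cross {i j : Fin n} (h : i ≠ j) :
    (S.heckeOp i j + ξ • (S.c i * S.c j)) * S.m (fun p => p.y i) * S.heckeOp i j =
      S.m fun p => p.y j := by
  rw [add_mul, S.heckeOp_mul_m_y h, smul_mul_assoc, sub_add_cancel, sub_mul, mul_assoc,
    S.heckeOp_mul_self h, smul_mul_assoc, mul_add, mul_smul_comm, mul_one, add_sub_cancel_left]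

end HeckeOperators

section CoordinateFunctions

theorem m_mul_m_eq_one {f g : GenericPoint ξ n → K}
    (h : ∀ p, f p * g p = 1) : S.m f * S.m g = 1 := by
  rw [← map_mul, ← map_one S.m]
  exact S.m_eq_m h

theorem commute_c_y {i j : Fin n} (h : i ≠ j) (g : K → K) :
    Commute (S.c i) (S.m fun p => g (p.y j)) :=
  S.commute_c_m fun p => by rw [p.flip_y_of_ne h.symm]

theorem commute_heckeOp_y {i j k : Fin n} (hi : k ≠ i) (hj : k ≠ j) (g : K → K) :
    Commute (S.heckeOp i j) (S.m fun p => g (p.y k)) :=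
  S.commute_heckeOp_m (fun p => by rw [GenericPoint.flip_y_of_ne _ hj, p.flip_y_of_ne hi])
    fun p => congrArg (fun l => g (p.y l)) (Equiv.swap_apply_of_ne_of_ne hi hj)

theorem commute_c_u (i : Fin n) (g : (Fin n → K) → K) : Commute (S.c i) (S.m fun p => g p.u) :=
  S.commute_c_m fun p => by rw [p.flip_u]

theorem commute_r_u (i j : Fin n) (g : (Fin n → K) → K) :
    Commute (S.r i j) (S.m fun p => g p.u) :=
  S.commute_r_m fun p => by rw [GenericPoint.flip_u, p.flip_u]

theorem commute_heckeOp_u {i j k : Fin n} (hi : k ≠ i) (hj : k ≠ j) :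
    Commute (S.heckeOp i j) (S.m fun p => p.u k) :=
  S.commute_heckeOp_m (fun p => by rw [GenericPoint.flip_u, p.flip_u])
    fun p => congrArg p.u (Equiv.swap_apply_of_ne_of_ne hi hj)

end CoordinateFunctions
end CrossedSystem

section Representation

variable {F}
variable {q : F} {n : ℕ} {K : Type*} [Field K] [Algebra F K] {E : Type*} [Ring E] [Algebra K E]
  (S : CrossedSystem (algebraMap F K (q - q⁻¹)) n E)

namespace CrossedSystem

/-- The images of the generators of `H_n` in a crossed system. -/
def genImage : Gen n → E
  | .X i => S.m fun p => p.y i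
  | .Xinv i => S.m fun p => (p.y i)⁻¹
  | .C i => S.c i
  | .T i => S.heckeOp (lo i) (hi i)

variable [Algebra F E] [IsScalarTower F K E]

theorem genImage_rel {a b : FA F n} (h : Rel F q n a b) :
    FreeAlgebra.lift F S.genImage a = FreeAlgebra.lift F S.genImage b := by
  induction h <;>
    simp only [fx, fxinv, fc, ft, map_mul, map_add, map_neg, map_smul, map_one,
      FreeAlgebra.lift_ι_apply, genImage, ← algebraMap_smul K (q - q⁻¹)]
  case XXinv i => exact S.m_mul_m_eq_one fun p => mul_inv_cancel₀ (p.y_ne_zero i)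
  case XinvX i => exact S.m_mul_m_eq_one fun p => inv_mul_cancel₀ (p.y_ne_zero i)
  case XX => exact (S.commute_m_m _ _).eq
  case XiXi => exact (S.commute_m_m _ _).eq
  case XXi => exact (S.commute_m_m _ _).eq
  case CC i => exact S.c_mul_self i
  case Canti i j h => exact S.c_mul_c i j h
  case CX i => simp only [S.c_mul_m, GenericPoint.flip_y_self]
  case CXi i => simp only [S.c_mul_m, GenericPoint.flip_y_self, inv_inv]
  case CXo i j h => exact (S.commute_c_y h id).eq
  case CXio i j h => exact (S.commute_c_y h (·⁻¹)).eq
  case Tquad i => exact S.heckeOp_mul_self (lo_ne_hi i)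
  case Tbraid i j h =>
    have hij : hi i = lo j := Fin.ext h.symm
    rw [← hij]
    exact S.heckeOp_braid (lo_ne_hi i) (Fin.ne_of_val_ne (by simp only [lo, hi]; omega))
      (hij ▸ lo_ne_hi j)
  case TTfar i j h =>
    refine (S.commute_heckeOp_heckeOp ?_ ?_ ?_ ?_).eq <;>
    exact Fin.ne_of_val_ne (by simp only [lo, hi]; omega)
  case TC i => exact S.heckeOp_mul_c (lo_ne_hi i)
  case TCo i j h1 h2 => exact (S.commute_heckeOp_c h1 h2).eq
  case TXo i j h1 h2 => exact (S.commute_heckeOp_y h1 h2 id).eq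
  case TXio i j h1 h2 => exact (S.commute_heckeOp_y h1 h2 (·⁻¹)).eq
  case cross i => exact S.heckeOp_cross (lo_ne_hi i)

/-- The homomorphism from `H_n` to a crossed system. -/
noncomputable def rep : H F q n →ₐ[F] E :=
  RingQuot.liftAlgHom F ⟨FreeAlgebra.lift F S.genImage, fun _ _ => S.genImage_rel⟩

theorem rep_gen (g : Gen n) : S.rep (gen q n g) = S.genImage g := by
  rw [rep, gen, RingQuot.liftAlgHom_mkAlgHom_apply, FreeAlgebra.lift_ι_apply]

theorem rep_X (i : Fin n) : S.rep (X F q i) = S.m fun p => p.y i := S.rep_gen (.X i)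

theorem rep_C (i : Fin n) : S.rep (C F q i) = S.c i := S.rep_gen (.C i)

theorem rep_T (i : Fin (n - 1)) : S.rep (T F q i) = S.heckeOp (lo i) (hi i) := S.rep_gen (.T i)

theorem rep_U (i : Fin n) : S.rep (U q i) = S.m fun p => p.u i := by
  rw [U, map_add, rep_X, show S.rep (Xinv F q i) = _ from S.rep_gen (.Xinv i), genImage, ← map_add]
  rfl

end CrossedSystem
end Representation

section Density

theorem exists_add_inv_eq {K : Type*} [Field K] [IsAlgClosed K] (u : K) :
    ∃ y : K, y ≠ 0 ∧ y + y⁻¹ = u := by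
  have hdeg : (.X ^ 2 - .C u * .X + 1 : Polynomial K).degree = 2 := by compute_degree!
  obtain ⟨y, hy⟩ := IsAlgClosed.exists_root _ (hdeg.trans_ne two_ne_zero)
  have h : y * (u - y) = 1 := by
    simp only [Polynomial.IsRoot, Polynomial.eval_add, Polynomial.eval_sub, Polynomial.eval_mul,
      Polynomial.eval_pow, Polynomial.eval_X, Polynomial.eval_C, Polynomial.eval_one] at hy
    linear_combination -hy
  exact ⟨y, left_ne_zero_of_mul_eq_one h, by
    rw [inv_eq_of_mul_eq_one_right h, add_sub_cancel]⟩

section GenericPolynomial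

variable {K : Type*} [Field K]

open MvPolynomial

/-- The polynomial whose non-vanishing at `u` expresses that `u` is generic. -/
noncomputable def genericPoly (ξ : K) (n : ℕ) : MvPolynomial (Fin n) K :=
  (∏ i, (MvPolynomial.X i ^ 2 - 4)) *
    ∏ i, ∏ j, if i = j then 1 else (MvPolynomial.X i - MvPolynomial.X j) *
      normNumerator (MvPolynomial.C ξ) (MvPolynomial.X i) (MvPolynomial.X j)

theorem genericPoly_ne_zero (ξ : K) (n : ℕ) : genericPoly ξ n ≠ 0 := by
  have ne_zero : ∀ (i : Fin n) {P : MvPolynomial (Fin n) K},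
      eval (Pi.single i 1) P - eval 0 P = 1 → P ≠ 0 := by
    rintro i _ h rfl
    exact zero_ne_one (by rw [← h, map_zero, map_zero, sub_zero])
  refine mul_ne_zero (Finset.prod_ne_zero_iff.2 fun i _ => ne_zero i ?_)
    (Finset.prod_ne_zero_iff.2 fun i _ => Finset.prod_ne_zero_iff.2 fun j _ => ?_)
  · simp [map_ofNat constantCoeff]
  split_ifs with hij
  · exact one_ne_zero
  · refine mul_ne_zero (ne_zero i ?_) (ne_zero i ?_)
    · simp [Ne.symm hij]
    · simp [normNumerator, map_ofNat constantCoeff, Ne.symm hij]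

theorem isGeneric_of_eval_genericPoly_ne_zero {ξ : K} {n : ℕ} {u : Fin n → K}
    (h : eval u (genericPoly ξ n) ≠ 0) : IsGeneric ξ u := by
  simp only [genericPoly, map_mul, map_prod, mul_ne_zero_iff, Finset.prod_ne_zero_iff,
    Finset.mem_univ, true_imp_iff] at h
  refine ⟨fun i hi => h.1 i (by simp [hi]), fun i j hij => ?_⟩
  have h' := h.2 i j
  rw [if_neg hij, map_mul, map_normNumerator, map_sub, eval_C, eval_X, eval_X,
    mul_ne_zero_iff, sub_ne_zero] at h'
  exact h'

theorem IsGeneric.exists_genericPoint [IsAlgClosed K] {ξ : K} {n : ℕ} {u : Fin n → K}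
    (h : IsGeneric ξ u) : ∃ p : GenericPoint ξ n, p.u = u := by
  choose y hy0 hy using fun i => exists_add_inv_eq (u i)
  exact ⟨⟨y, 1, 1, hy0, by rwa [funext hy]⟩, funext hy⟩

theorem eq_zero_of_aeval_u_eq_zero {F : Type*} [Field F] [Algebra F K] [IsAlgClosed K] (ξ : K)
    {n : ℕ} {G : MvPolynomial (Fin n) F} (hG : ∀ p : GenericPoint ξ n, aeval p.u G = 0) :
    G = 0 := by
  have : Infinite K := IsAlgClosed.instInfinite
  have h : map (algebraMap F K) G * genericPoly ξ n = 0 := MvPolynomial.funext fun v => by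
    rw [map_mul, map_zero, mul_eq_zero, or_iff_not_imp_right]
    intro hv
    obtain ⟨p, rfl⟩ := (isGeneric_of_eval_genericPoly_ne_zero hv).exists_genericPoint
    rw [eval_map, ← aeval_def, hG]
  exact (map_eq_zero_iff _ (map_injective _ (algebraMap F K).injective)).1
    ((mul_eq_zero.1 h).resolve_right (genericPoly_ne_zero ξ n))

end GenericPolynomial

variable {F}

/-- The polynomial with the given coefficients. -/
noncomputable def polyOf {n : ℕ} (coef : (Fin n → ℕ) →₀ F) : MvPolynomial (Fin n) F :=
  coef.sum fun α c => MvPolynomial.monomial (Finsupp.equivFunOnFinite.symm α) c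

theorem coeff_polyOf {n : ℕ} (coef : (Fin n → ℕ) →₀ F) (α : Fin n → ℕ) :
    (polyOf coef).coeff (Finsupp.equivFunOnFinite.symm α) = coef α := by
  classical
  simp only [polyOf, Finsupp.sum, MvPolynomial.coeff_sum, MvPolynomial.coeff_monomial,
    EmbeddingLike.apply_eq_iff_eq]
  simp [eq_comm]

theorem isSymmetric_polyOf_iff {n : ℕ} {coef : (Fin n → ℕ) →₀ F} :
    (polyOf coef).IsSymmetric ↔ ∀ (σ : Equiv.Perm (Fin n)) α, coef (α ∘ σ) = coef α := by
  have mapDomain_comp : ∀ (σ : Equiv.Perm (Fin n)) (α : Fin n → ℕ),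
      (Finsupp.equivFunOnFinite.symm (α ∘ σ)).mapDomain σ = Finsupp.equivFunOnFinite.symm α :=
    fun σ α => by
      ext i
      obtain ⟨j, rfl⟩ := σ.surjective i
      rw [Finsupp.mapDomain_apply σ.injective]
      rfl
  have coeff_rename : ∀ (σ : Equiv.Perm (Fin n)) (α : Fin n → ℕ),
      (MvPolynomial.rename σ (polyOf coef)).coeff (Finsupp.equivFunOnFinite.symm α) =
        coef (α ∘ σ) := fun σ α => by
    rw [← mapDomain_comp σ, MvPolynomial.coeff_rename_mapDomain _ σ.injective, coeff_polyOf]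
  refine forall_congr' fun σ => ⟨fun hG α => ?_, fun hc => MvPolynomial.ext _ _ fun d => ?_⟩
  · rw [← coeff_rename, hG, coeff_polyOf]
  · rw [← Finsupp.equivFunOnFinite.symm_apply_apply d, coeff_rename, hc, coeff_polyOf]

variable {q : F} {n : ℕ} {K : Type*} [Field K] [Algebra F K] {E : Type*} [Ring E] [Algebra K E]
  [Algebra F E] [IsScalarTower F K E] (S : CrossedSystem (algebraMap F K (q - q⁻¹)) n E)

theorem exists_coef_of_mem_polySubalgebra_zero {z : H F q n} (hz : z ∈ polySubalgebra q n 0) :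
    ∃ coef : (Fin n → ℕ) →₀ F, (coef.sum fun α c => c • evalSym F q α) = z :=
  Finsupp.mem_span_range_iff_exists_finsupp.1 (polySubalgebra_zero_le_span_evalSym hz)

namespace CrossedSystem

theorem rep_evalSym (α : Fin n → ℕ) :
    S.rep (evalSym F q α) = S.m fun p => ∏ i, p.u i ^ α i := by
  have h : (fun p : GenericPoint (algebraMap F K (q - q⁻¹)) n => ∏ i, p.u i ^ α i) =
      ((List.finRange n).map fun i => (fun p => p.u i) ^ α i).prod := by
    rw [← List.ofFn_eq_map, List.prod_ofFn]
    funext p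
    rw [Finset.prod_apply]
    rfl
  rw [h, evalSym, map_list_prod, map_list_prod, List.map_map, List.map_map]
  refine congrArg (fun f => (List.map f _).prod) (funext fun i => ?_)
  rw [Function.comp_apply, map_pow, ← U, rep_U, Function.comp_apply, map_pow]

theorem rep_sum_evalSym (coef : (Fin n → ℕ) →₀ F) :
    S.rep (coef.sum fun α c => c • evalSym F q α) =
      S.m fun p => MvPolynomial.aeval p.u (polyOf coef) := by
  simp only [Finsupp.sum, map_sum, map_smul, rep_evalSym, polyOf, ← algebraMap_smul K (_ : F)]
  simp only [← map_smul, ← map_sum]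
  refine S.m_eq_m fun p => ?_
  simp [MvPolynomial.aeval_monomial, Algebra.smul_def, Finsupp.prod_fintype]

theorem eq_zero_of_mem_polySubalgebra_zero [IsAlgClosed K] {z : H F q n}
    (hz : z ∈ polySubalgebra q n 0) (h : S.rep z = 0) : z = 0 := by
  obtain ⟨coef, rfl⟩ := exists_coef_of_mem_polySubalgebra_zero hz
  rw [rep_sum_evalSym] at h
  have hG : polyOf coef = 0 := eq_zero_of_aeval_u_eq_zero (algebraMap F K (q - q⁻¹))
    (congrFun (S.m_injective (h.trans (map_zero S.m).symm)))
  have hcoef : coef = 0 := Finsupp.ext fun α => by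
    rw [← coeff_polyOf, hG, MvPolynomial.coeff_zero, Finsupp.zero_apply]
  rw [hcoef, Finsupp.sum_zero_index]

end CrossedSystem
end Density

section Descent

section LeftSpanPair

variable {R A B : Type*} [CommRing R] [Ring A] [Algebra R A] [Ring B]

theorem eq_zero_of_commute_add_mul {a b d e : B} (ha : Commute d a) (hb : Commute d b)
    (hde : IsUnit (d * e - e * d)) (h : Commute d (a + b * e)) : b = 0 := by
  refine hde.mul_left_eq_zero.1 ?_
  have h' := h.eq
  rw [mul_add, add_mul, ha.eq, add_right_inj, ← mul_assoc, hb.eq] at h'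
  rw [mul_sub, ← mul_assoc, ← mul_assoc, h', sub_self]

theorem mem_of_mem_leftSpanPair_of_commute {S : Subalgebra R A} {e : A} {f : A →+* B} {d : B}
    (hd : ∀ x ∈ S, Commute d (f x)) (hde : IsUnit (d * f e - f e * d))
    (hf : ∀ x ∈ S, f x = 0 → x = 0) {z : A} (hz : z ∈ leftSpanPair S e) (h : Commute d (f z)) :
    z ∈ S := by
  obtain ⟨a, ha, b, hb, rfl⟩ := mem_leftSpanPair.1 hz
  rw [map_add, map_mul] at h
  rw [hf b hb (eq_zero_of_commute_add_mul (hd a ha) (hd b hb) hde h), zero_mul, add_zero]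
  exact ha

end LeftSpanPair

theorem descent_of_commute {A B ι : Type*} [Zero A] [MulZeroClass B] {f : A → B} {N : ℕ → Set A}
    {d : ι → B} {l : ℕ} (h0 : ∀ z ∈ N 0, f z = 0 → z = 0)
    (hstep : ∀ k < l, (∀ z ∈ N k, f z = 0 → z = 0) →
      ∀ z ∈ N (k + 1), (∀ i, Commute (d i) (f z)) → z ∈ N k) :
    (∀ z ∈ N l, f z = 0 → z = 0) ∧ ∀ z ∈ N l, (∀ i, Commute (d i) (f z)) → z ∈ N 0 := by
  induction l with
  | zero => exact ⟨h0, fun z hz _ => hz⟩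
  | succ l ih =>
    obtain ⟨hker, hmem⟩ := ih fun k hk => hstep k (hk.trans l.lt_succ_self)
    have hdown := hstep l l.lt_succ_self hker
    exact ⟨fun z hz h => hker z (hdown z hz fun i => h ▸ Commute.zero_right _) h,
      fun z hz h => hmem z (hdown z hz h) h⟩

section Weights

variable {E : Type*} [Ring E]

/-- The elements of weight `a` with respect to `v`, i.e. those intertwining right multiplication by
`a` with left multiplication by `v`. -/
def weightSpace (v a : E) : AddSubgroup E where
  carrier := {x | SemiconjBy x a v}
  add_mem' := SemiconjBy.add_left
  zero_mem' := SemiconjBy.zero_left a v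
  neg_mem' := SemiconjBy.neg_left

/-- The sums of elements of weights `u 0, …, u (d - 1)`. -/
def weightFiltration (v : E) (u : ℕ → E) (d : ℕ) : AddSubgroup E :=
  ⨆ e < d, weightSpace v (u e)

variable {v : E} {u : ℕ → E} {d : ℕ} {x y : E}

theorem mul_mem_weightSpace {a b : E} (hx : x ∈ weightSpace v a) (hy : SemiconjBy y b a) :
    x * y ∈ weightSpace v b :=
  SemiconjBy.mul_left hx hy

theorem commute_mul_mem_weightSpace {a : E} (hy : Commute y v) (hx : x ∈ weightSpace v a) :
    y * x ∈ weightSpace v a :=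
  SemiconjBy.mul_left hy hx

theorem mem_weightFiltration {e : ℕ} (he : e < d) (hx : x ∈ weightSpace v (u e)) :
    x ∈ weightFiltration v u d :=
  le_iSup₂ (f := fun e (_ : e < d) => weightSpace v (u e)) e he hx

theorem weightFiltration_mono : Monotone (weightFiltration v u) := fun _ _ h =>
  iSup₂_le fun _ he _ => mem_weightFiltration (he.trans_le h)

theorem mul_mem_weightFiltration (hx : x ∈ weightFiltration v u d)
    (hy : ∀ e < d, Commute y (u e)) : x * y ∈ weightFiltration v u d := by
  have hle : weightFiltration v u d ≤
      (weightFiltration v u d).comap (AddMonoidHom.mulRight y) :=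
    iSup₂_le fun e he x hx => mem_weightFiltration he (mul_mem_weightSpace hx (hy e he))
  exact hle hx

theorem commute_mul_mem_weightFiltration (hy : Commute y v) (hx : x ∈ weightFiltration v u d) :
    y * x ∈ weightFiltration v u d := by
  have hle : weightFiltration v u d ≤
      (weightFiltration v u d).comap (AddMonoidHom.mulLeft y) :=
    iSup₂_le fun e he x hx => mem_weightFiltration he (commute_mul_mem_weightSpace hy hx)
  exact hle hx

theorem eq_zero_of_mem_weightFiltration (hu : ∀ i j, Commute (u i) (u j)) {a : ℕ}
    (hd : ∀ e < d, IsUnit (u e - u a)) (hx : x ∈ weightSpace v (u a))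
    (hxd : x ∈ weightFiltration v u d) : x = 0 := by
  induction d generalizing x with
  | zero => simpa [weightFiltration] using hxd
  | succ d ih =>
    rw [weightFiltration, Nat.iSup_lt_succ] at hxd
    obtain ⟨y, hy, z, hz, hyz⟩ := AddSubgroup.mem_sup.1 hxd
    refine (hd d d.lt_succ_self).mul_left_eq_zero.1
      (ih (fun e he => hd e (he.trans d.lt_succ_self))
        (mul_mem_weightSpace hx ((hu d a).sub_left (hu a a))) ?_)
    have hxa : x * u a = v * x := hx
    have hzd : z * u d = v * z := hz
    have key : x * (u d - u a) = y * u d - v * y := by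
      rw [mul_sub, hxa, ← hyz, add_mul, mul_add, hzd, add_sub_add_right_eq_sub]
    rw [key]
    refine sub_mem (mul_mem_weightFiltration hy fun e _ => hu d e)
      (commute_mul_mem_weightFiltration (Commute.refl v) hy)

theorem eq_zero_of_sum_mem_weightSpace (hu : ∀ i j, Commute (u i) (u j)) {N : ℕ} {b : Fin N → E}
    {t : ℕ → E} (hunit : ∀ d < N, ∀ e < d, IsUnit (u e - u d)) (hb : ∀ d, Commute (b d) v)
    (ht : ∀ d < N, ∃ Φ ∈ weightSpace v (u d), IsUnit Φ ∧ t d - Φ ∈ weightFiltration v u d)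
    (h : ∑ d, b d * t d ∈ weightSpace v (u 0)) (d : Fin N) (hd : (d : ℕ) ≠ 0) : b d = 0 := by
  induction N with
  | zero => exact d.elim0
  | succ N ih =>
    rcases N.eq_zero_or_pos with rfl | hN
    · exact absurd (Fin.val_eq_zero d) hd
    have hsum : ∑ e : Fin N, b e.castSucc * t e ∈ weightFiltration v u N := by
      refine sum_mem fun e _ => commute_mul_mem_weightFiltration (hb _) ?_
      obtain ⟨Φ, hΦ, -, hΦt⟩ := ht e (e.isLt.trans N.lt_succ_self)
      rw [← sub_add_cancel (t e) Φ]
      exact add_mem (weightFiltration_mono e.isLt.le hΦt) (mem_weightFiltration e.isLt hΦ)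
    have hlast : b (Fin.last N) = 0 := by
      obtain ⟨Φ, hΦ, hΦunit, hΦt⟩ := ht N N.lt_succ_self
      refine hΦunit.mul_left_eq_zero.1 (eq_zero_of_mem_weightFiltration hu (hunit N N.lt_succ_self)
        (commute_mul_mem_weightSpace (hb _) hΦ) ?_)
      have key : b (Fin.last N) * Φ = ∑ d, b d * t d - ∑ e : Fin N, b e.castSucc * t e -
          b (Fin.last N) * (t N - Φ) := by
        simp only [Fin.sum_univ_castSucc, Fin.val_castSucc, Fin.val_last, add_sub_cancel_left,
          mul_sub, sub_sub_cancel]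
      rw [key]
      exact sub_mem (sub_mem (mem_weightFiltration hN h) hsum)
        (commute_mul_mem_weightFiltration (hb _) hΦt)
    induction d using Fin.lastCases with
    | last => exact hlast
    | cast e =>
      refine ih (fun d hd => hunit d (hd.trans N.lt_succ_self)) (fun e => hb e.castSucc)
        (fun d hd => ht d (hd.trans N.lt_succ_self)) ?_ e hd
      rw [Fin.sum_univ_castSucc, hlast, zero_mul, add_zero] at h
      exact h

end Weights

namespace CrossedSystem

variable {F}
variable {q : F} {n : ℕ} {K : Type*} [Field K] [Algebra F K] {E : Type*} [Ring E] [Algebra K E]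
  (S : CrossedSystem (algebraMap F K (q - q⁻¹)) n E)

section LeadingTerm

variable {m : ℕ} (hm : m < n - 1)

/-- The index that the product of the transpositions underlying `Tdesc q n m d` sends to `m + 1`. -/
def descIdx (d : ℕ) : Fin n := ⟨m + 1 - d, by omega⟩

theorem isUnit_u_sub_u {i j : Fin n} (h : i ≠ j) :
    IsUnit ((S.m fun p => p.u i) - S.m fun p => p.u j) := by
  rw [← map_sub]
  exact S.isUnit_m fun p => sub_ne_zero.2 (p.u_ne h)

theorem phi_mem_weightSpace (i j : Fin n) :
    S.phi i j ∈ weightSpace (S.m fun p => p.u j) (S.m fun p => p.u i) := by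
  refine (S.phi_mul_m i j _).trans ?_
  exact congrArg (· * _) (S.m_eq_m fun p => congrArg p.u (Equiv.swap_apply_left i j))

variable [Algebra F E] [IsScalarTower F K E]

theorem exists_leadingTerm_rep_Tdesc {d : ℕ} (hd : d ≤ m + 1) :
    ∃ Φ ∈ weightSpace (S.m fun p => p.u (descIdx hm 0)) (S.m fun p => p.u (descIdx hm d)),
      IsUnit Φ ∧ S.rep (Tdesc q n m d) - Φ ∈
        weightFiltration (S.m fun p => p.u (descIdx hm 0))
          (fun e => S.m fun p => p.u (descIdx hm e)) d := by
  induction d with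
  | zero =>
    exact ⟨1, SemiconjBy.one_left _, isUnit_one, by rw [Tdesc, map_one, sub_self]; exact zero_mem _⟩
  | succ d ih =>
    obtain ⟨Φ, hΦ, hΦunit, hΦt⟩ := ih (by omega)
    have hlo : lo ⟨m - d, by omega⟩ = descIdx hm (d + 1) :=
      Fin.ext (by simp only [lo, descIdx]; omega)
    have hhi : hi ⟨m - d, by omega⟩ = descIdx hm d := Fin.ext (by simp only [hi, descIdx]; omega)
    have hne {e : ℕ} (he : e < m + 1) {e' : ℕ} (hee : e < e') : descIdx hm e ≠ descIdx hm e' :=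
      Fin.ne_of_val_ne (by simp only [descIdx]; omega)
    set i := descIdx hm (d + 1)
    set j := descIdx hm d
    refine ⟨Φ * S.phi i j, mul_mem_weightSpace hΦ (S.phi_mem_weightSpace i j),
      hΦunit.mul (S.isUnit_phi (hne hd d.lt_succ_self).symm), ?_⟩
    have hT : S.rep (Tdesc q n m (d + 1)) = S.rep (Tdesc q n m d) * S.heckeOp i j := by
      rw [Tdesc, map_mul, Tnat_eq (by omega), rep_T, hlo, hhi]
    have key : S.rep (Tdesc q n m (d + 1)) - Φ * S.phi i j =
        Φ * S.r i j + (S.rep (Tdesc q n m d) - Φ) * S.heckeOp i j := by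
      rw [hT, heckeOp]
      noncomm_ring
    rw [key]
    refine add_mem (mem_weightFiltration d.lt_succ_self
      (mul_mem_weightSpace hΦ (S.commute_r_u i j (· _))))
      (weightFiltration_mono d.le_succ (mul_mem_weightFiltration hΦt fun e he => ?_))
    exact S.commute_heckeOp_u (hne (by omega) (by omega)) (hne (by omega) he)

end LeadingTerm

variable [Algebra F E] [IsScalarTower F K E]

theorem isUnit_rep_C_mul_X_sub_X_mul_C (i : Fin n) :
    IsUnit (S.rep (C F q i) * S.rep (X F q i) - S.rep (X F q i) * S.rep (C F q i)) := by
  have hc : IsUnit (S.c i) := ⟨⟨_, _, S.c_mul_self i, S.c_mul_self i⟩, rfl⟩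
  rw [rep_C, rep_X, S.c_mul_m, ← sub_mul, ← map_sub]
  refine (S.isUnit_m fun p => sub_ne_zero.2 ?_).mul hc
  rw [p.flip_y_self]
  exact (p.y_ne_inv i).symm

theorem mem_cliffordHeckeSpan_of_commute {m : ℕ} (hm : m < n - 1)
    (hker : ∀ z ∈ cliffordHeckeSpan q n m, S.rep z = 0 → z = 0) {z : H F q n}
    (hz : z ∈ cliffordHeckeSpan q n (m + 1))
    (h : Commute (S.rep (U q (descIdx hm 0))) (S.rep z)) : z ∈ cliffordHeckeSpan q n m := by
  obtain ⟨b, hb, rfl⟩ := exists_sum_mul_Tdesc hm hz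
  rw [rep_U, map_sum] at h
  simp only [map_mul] at h
  have hb0 : ∀ d : Fin (m + 2), (d : ℕ) ≠ 0 → b d = 0 := fun d hd => by
    refine hker _ (hb d) (eq_zero_of_sum_mem_weightSpace (b := fun d => S.rep (b d))
      (t := fun d => S.rep (Tdesc q n m d)) (v := S.m fun p => p.u (descIdx hm 0))
      (u := fun e => S.m fun p => p.u (descIdx hm e)) (fun _ _ => S.commute_m_m _ _)
      (fun d hd e he => S.isUnit_u_sub_u (Fin.ne_of_val_ne ?_)) (fun d => ?_)
      (fun d hd => S.exists_leadingTerm_rep_Tdesc hm (Nat.le_of_lt_succ hd)) h.symm d hd)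
    · simp only [descIdx]
      omega
    · rw [← rep_U]
      exact (commute_U_of_mem_cliffordHeckeSpan m.lt_succ_self (hb d)).symm.map S.rep
  rw [Fin.sum_univ_succ, Finset.sum_eq_zero fun d _ => by rw [hb0 d.succ d.val.succ_ne_zero,
    zero_mul], add_zero, Fin.val_zero, Tdesc, mul_one]
  exact hb 0

section Injectivity

variable [IsAlgClosed K]

theorem polySubalgebra_descent :
    (∀ z ∈ polySubalgebra q n n, S.rep z = 0 → z = 0) ∧ ∀ z ∈ polySubalgebra q n n,
      (∀ i, Commute (S.rep (C F q i)) (S.rep z)) → z ∈ polySubalgebra q n 0 :=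
  descent_of_commute (f := S.rep) (N := fun k => polySubalgebra q n k)
    (d := fun i => S.rep (C F q i))
    (fun _ => S.eq_zero_of_mem_polySubalgebra_zero) fun k hk hker _ hz h =>
      mem_of_mem_leftSpanPair_of_commute (f := S.rep.toRingHom)
        (fun _ hx => (commute_C_of_mem_polySubalgebra (i := ⟨k, hk⟩) le_rfl hx).map S.rep)
        (S.isUnit_rep_C_mul_X_sub_X_mul_C ⟨k, hk⟩) hker (polySubalgebra_succ_le hk hz) (h ⟨k, hk⟩)

theorem cliffordSubalgebra_descent :
    (∀ z ∈ cliffordSubalgebra q n n, S.rep z = 0 → z = 0) ∧ ∀ z ∈ cliffordSubalgebra q n n,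
      (∀ i, Commute (S.rep (X F q i)) (S.rep z)) → z ∈ cliffordSubalgebra q n 0 :=
  descent_of_commute (f := S.rep) (N := fun k => cliffordSubalgebra q n k)
    (d := fun i => S.rep (X F q i))
    (fun z hz => S.polySubalgebra_descent.1 z (cliffordSubalgebra_zero_le hz))
    fun k hk hker _ hz h => mem_of_mem_leftSpanPair_of_commute (f := S.rep.toRingHom)
      (fun _ hx => (commute_X_of_mem_cliffordSubalgebra (i := ⟨k, hk⟩) le_rfl hx).map S.rep)
      (neg_sub (_ : E) _ ▸ (S.isUnit_rep_C_mul_X_sub_X_mul_C ⟨k, hk⟩).neg) hker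
      (cliffordSubalgebra_succ_le hk hz) (h ⟨k, hk⟩)

theorem cliffordHeckeSpan_descent :
    (∀ z ∈ cliffordHeckeSpan q n (n - 1), S.rep z = 0 → z = 0) ∧
      ∀ z ∈ cliffordHeckeSpan q n (n - 1), (∀ i, Commute (S.rep (U q i)) (S.rep z)) →
        z ∈ cliffordHeckeSpan q n 0 :=
  descent_of_commute (f := S.rep) (N := fun m => cliffordHeckeSpan q n m)
    (d := fun i => S.rep (U q i))
    (fun z hz => S.cliffordSubalgebra_descent.1 z (by rwa [cliffordHeckeSpan_zero] at hz))
    fun _ hm hker _ hz h => S.mem_cliffordHeckeSpan_of_commute hm hker hz (h (descIdx hm 0))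

theorem rep_injective : Function.Injective S.rep :=
  (injective_iff_map_eq_zero S.rep).2 fun z =>
    S.cliffordHeckeSpan_descent.1 z (mem_cliffordHeckeSpan z)

theorem mem_polySubalgebra_zero_of_commute {z : H F q n}
    (hz : ∀ y, Commute (S.rep y) (S.rep z)) : z ∈ polySubalgebra q n 0 := by
  have hspan : z ∈ cliffordHeckeSpan q n 0 :=
    S.cliffordHeckeSpan_descent.2 z (mem_cliffordHeckeSpan z) fun i => hz (U q i)
  rw [cliffordHeckeSpan_zero] at hspan
  have hcliff : z ∈ cliffordSubalgebra q n 0 :=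
    S.cliffordSubalgebra_descent.2 z hspan fun i => hz (X F q i)
  exact S.polySubalgebra_descent.2 z (cliffordSubalgebra_zero_le hcliff) fun i => hz (C F q i)

end Injectivity

end CrossedSystem
end Descent

section Center

theorem isSymmetric_of_rename_swap {R : Type*} [CommSemiring R] {n : ℕ}
    {G : MvPolynomial (Fin n) R}
    (h : ∀ i : Fin (n - 1), MvPolynomial.rename (Equiv.swap (lo i) (hi i)) G = G) :
    G.IsSymmetric := by
  intro σ
  match n with
  | 0 => rw [Subsingleton.elim σ 1, Equiv.Perm.coe_one, MvPolynomial.rename_id_apply]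
  | n + 1 =>
    have hσ : σ ∈ Submonoid.closure (Set.range fun i : Fin n => Equiv.swap i.castSucc i.succ) :=
      Equiv.Perm.mclosure_swap_castSucc_succ n ▸ Submonoid.mem_top σ
    induction hσ using Submonoid.closure_induction with
    | mem _ hτ =>
      obtain ⟨i, rfl⟩ := hτ
      exact h i
    | one => rw [Equiv.Perm.coe_one, MvPolynomial.rename_id_apply]
    | mul σ τ _ _ hσ hτ => rw [Equiv.Perm.coe_mul, ← MvPolynomial.rename_rename, hτ, hσ]

namespace CrossedSystem

variable {F}

section Symmetry

variable {K : Type*} [Field K] [Algebra F K] {ξ : K} {n : ℕ} {E : Type*} [Ring E] [Algebra K E]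
  (S : CrossedSystem ξ n E) {G : MvPolynomial (Fin n) F}

theorem aeval_u_permute_of_commute_heckeOp {i j : Fin n} (hij : i ≠ j)
    (h : Commute (S.heckeOp i j) (S.m fun p => MvPolynomial.aeval p.u G)) (p : GenericPoint ξ n) :
    MvPolynomial.aeval (p.permute (Equiv.swap i j)).u G = MvPolynomial.aeval p.u G := by
  have hphi : Commute (S.phi i j) (S.m fun p => MvPolynomial.aeval p.u G) := by
    rw [← add_sub_cancel_right (S.phi i j) (S.r i j)]
    exact h.sub_left (S.commute_r_u i j fun u => MvPolynomial.aeval u G)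
  rw [Commute, SemiconjBy, phi_mul_m] at hphi
  exact congrFun (S.m_injective ((S.isUnit_phi hij).mul_right_cancel hphi)) p

theorem isSymmetric_of_commute_heckeOp [IsAlgClosed K]
    (h : ∀ i, Commute (S.heckeOp (lo i) (hi i)) (S.m fun p => MvPolynomial.aeval p.u G)) :
    G.IsSymmetric :=
  isSymmetric_of_rename_swap fun i => sub_eq_zero.1 <| eq_zero_of_aeval_u_eq_zero ξ fun p => by
    rw [map_sub, MvPolynomial.aeval_rename, sub_eq_zero]
    exact S.aeval_u_permute_of_commute_heckeOp (lo_ne_hi i) (h i) p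

end Symmetry

theorem commute_rep_of_isSymmetric {q : F} {n : ℕ} {K : Type*} [Field K] [Algebra F K]
    {E : Type*} [Ring E] [Algebra K E] [Algebra F E] [IsScalarTower F K E]
    (S : CrossedSystem (algebraMap F K (q - q⁻¹)) n E) {G : MvPolynomial (Fin n) F}
    (h : G.IsSymmetric) (y : H F q n) :
    Commute (S.m fun p => MvPolynomial.aeval p.u G) (S.rep y) := by
  have hy : S.rep y ∈ Algebra.adjoin F (Set.range S.genImage) := by
    have hgen : S.rep '' Set.range (gen q n) = Set.range S.genImage := by
      rw [← Set.range_comp]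
      exact congrArg Set.range (funext S.rep_gen)
    rw [← hgen, ← AlgHom.map_adjoin, adjoin_range_gen]
    exact ⟨y, Algebra.mem_top, rfl⟩
  refine Algebra.commute_of_mem_adjoin_of_forall_mem_commute hy ?_
  rintro _ ⟨g, rfl⟩
  cases g with
  | X i => exact S.commute_m_m _ _
  | Xinv i => exact S.commute_m_m _ _
  | C i => exact (S.commute_c_u i fun u => MvPolynomial.aeval u G).symm
  | T i =>
    refine (S.commute_heckeOp_m (fun p => ?_) fun p => ?_).symm
    · rw [GenericPoint.flip_u, p.flip_u]
    · conv_rhs => rw [← h (Equiv.swap (lo i) (hi i)), MvPolynomial.aeval_rename]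
      rfl

end CrossedSystem

theorem center_of_affine_hecke_clifford_general (F : Type) [Field F] (q : F) (_hq : q ≠ 0) (n : ℕ)
    (z : H F q n) :
    (∀ y : H F q n, z * y = y * z) ↔
      ∃ coef : (Fin n → ℕ) →₀ F,
        (∀ (σ : Equiv.Perm (Fin n)) (α : Fin n → ℕ), coef (α ∘ σ) = coef α) ∧
        z = coef.sum fun α c => c • evalSym F q α := by
  let S := CrossedSystem.ofFunctions (algebraMap F (AlgebraicClosure F) (q - q⁻¹)) n
  constructor
  · intro hz
    have hrep (y : H F q n) : Commute (S.rep y) (S.rep z) := Commute.map (hz y).symm S.rep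
    obtain ⟨coef, rfl⟩ :=
      exists_coef_of_mem_polySubalgebra_zero (S.mem_polySubalgebra_zero_of_commute hrep)
    refine ⟨coef, isSymmetric_polyOf_iff.1 (S.isSymmetric_of_commute_heckeOp fun i => ?_), rfl⟩
    rw [← S.rep_T, ← S.rep_sum_evalSym]
    exact hrep (T F q i)
  · rintro ⟨coef, hcoef, rfl⟩ y
    refine Commute.of_map S.rep_injective ?_
    rw [S.rep_sum_evalSym]
    exact S.commute_rep_of_isSymmetric (isSymmetric_polyOf_iff.2 hcoef) y

end Center

/-- **The center of `H_n`** (Theorem `LCenter` of Brundan–Kleshchev): an element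
`z ∈ H_n` is central (equivalently, supercentral) if and only if it is a symmetric
polynomial in `X_1 + X_1⁻¹, …, X_n + X_n⁻¹`. -/
theorem center_of_affine_hecke_clifford
    (F : Type) [Field F] [IsAlgClosed F] (h2 : (2 : F) ≠ 0)
    (q : F) (hq : GoodParam F q) (n : ℕ) (z : H F q n) :
    (∀ y : H F q n, z * y = y * z) ↔
      ∃ coef : (Fin n → ℕ) →₀ F,
        (∀ (σ : Equiv.Perm (Fin n)) (α : Fin n → ℕ), coef (α ∘ σ) = coef α) ∧
        z = coef.sum fun α cc => cc • evalSym F q α :=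
  center_of_affine_hecke_clifford_general F q hq.1 n z

end HC
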